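/- arXiv:2301.09101 — 2 statements merged into one kernel-verified Lean document; each statement's English description precedes it below -/
import Mathlib

section
/- Let p be a prime and G₁ a special p-group with center of order p² and d(G₁) = d. Then p^{(1/2)d(d-1) − 2} ≤ |M(G₁)| ≤ p^{(1/2)d(d-1) + 3}. -/
/-- The Schur multiplier of a group `G`: the second cohomology group `H²(G, ℂˣ)`
of `G` with coefficients in `ℂˣ` (with trivial `G`-action), as in the paper. -/
noncomputable def schurMultiplier (G : Type) [Group G] : Type :=
  groupCohomology (Rep.trivial ℤ G (Additive ℂˣ)) 2

namespace SchurAux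

open scoped commutatorElement IsMulCommutative

/-- 2-cocycles -/
def Zc (G : Type) [Group G] : Subgroup (G → G → ℂˣ) where
  carrier := {f | ∀ x y z, f x y * f (x * y) z = f y z * f x (y * z)}
  one_mem' := by intro x y z; simp
  mul_mem' := by
    intro f g hf hg x y z
    simp only [Pi.mul_apply]
    rw [mul_mul_mul_comm, hf, hg, mul_mul_mul_comm]
  inv_mem' := by
    intro f hf x y z
    simp only [Pi.inv_apply]
    rw [← mul_inv, hf, mul_inv]

/-- 2-coboundaries -/
def IsCob {G : Type} [Group G] (f : G → G → ℂˣ) : Prop :=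
  ∃ c : G → ℂˣ, ∀ x y, f x y = c x * c y / c (x * y)

def Bc (G : Type) [Group G] : Subgroup (Zc G) where
  carrier := {f | IsCob f.1}
  one_mem' := ⟨1, by intro x y; simp⟩
  mul_mem' := by
    rintro f g ⟨c, hc⟩ ⟨e, he⟩
    refine ⟨c * e, fun x y => ?_⟩
    simp only [Subgroup.coe_mul, Pi.mul_apply, hc, he]
    rw [div_mul_div_comm, mul_mul_mul_comm]
  inv_mem' := by
    rintro f ⟨c, hc⟩
    refine ⟨c⁻¹, fun x y => ?_⟩
    simp only [Subgroup.coe_inv, Pi.inv_apply, hc]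
    rw [inv_div, div_eq_mul_inv, div_eq_mul_inv, inv_inv, mul_inv, mul_comm]

variable {G : Type} [Group G]

theorem coc (f : Zc G) (x y z : G) : f.1 x y * f.1 (x * y) z = f.1 y z * f.1 x (y * z) :=
  f.2 x y z

theorem coc_one (f : Zc G) (x : G) : f.1 1 x = f.1 1 1 := by
  have := coc f 1 1 x
  simp only [one_mul] at this
  exact (mul_right_cancel this).symm

theorem coc_one' (f : Zc G) (x : G) : f.1 x 1 = f.1 1 1 := by
  have := coc f x 1 1
  simp only [mul_one] at this
  exact (mul_right_cancel this)

/-- the central extension -/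
structure Ext (f : Zc G) where
  g : G
  a : ℂˣ

namespace Ext
variable (f : Zc G)

instance : Mul (Ext f) := ⟨fun e e' => ⟨e.g * e'.g, e.a * e'.a * f.1 e.g e'.g⟩⟩
instance : One (Ext f) := ⟨⟨1, (f.1 1 1)⁻¹⟩⟩
instance : Inv (Ext f) := ⟨fun e => ⟨e.g⁻¹, e.a⁻¹ * (f.1 e.g⁻¹ e.g)⁻¹ * (f.1 1 1)⁻¹⟩⟩

theorem mul_def (e e' : Ext f) : e * e' = ⟨e.g * e'.g, e.a * e'.a * f.1 e.g e'.g⟩ := rfl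
theorem one_def : (1 : Ext f) = ⟨1, (f.1 1 1)⁻¹⟩ := rfl
theorem inv_def (e : Ext f) : e⁻¹ = ⟨e.g⁻¹, e.a⁻¹ * (f.1 e.g⁻¹ e.g)⁻¹ * (f.1 1 1)⁻¹⟩ := rfl

instance : Group (Ext f) := Group.ofLeftAxioms
  (by
    intro a b c
    simp only [mul_def, mul_assoc, Ext.mk.injEq, true_and]
    have := coc f a.g b.g c.g
    have h2 : ∀ s t u v w k : ℂˣ, s * t = u * v → a.a * (b.a * (s * (c.a * t))) =
      a.a * (b.a * (c.a * (u * v))) := by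
      intro s t u v w k h
      rw [← h, mul_left_comm s]
    exact h2 _ _ _ _ 1 1 this)
  (by
    rintro ⟨x, a⟩
    simp [mul_def, one_def, coc_one f x, mul_comm])
  (by
    rintro ⟨x, a⟩
    simp only [mul_def, one_def, inv_def, inv_mul_cancel, Ext.mk.injEq, true_and]
    have : ∀ u v w : ℂˣ, w⁻¹ * u⁻¹ * v * w * u = v := by
      intro u v w
      rw [mul_right_comm, mul_right_comm _ _ u, mul_right_comm _ v w]; simp
    exact this _ _ _)

def pr : Ext f →* G := ⟨⟨fun e => e.g, rfl⟩, fun _ _ => rfl⟩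

def io : ℂˣ →* Ext f where
  toFun a := ⟨1, a * (f.1 1 1)⁻¹⟩
  map_one' := by simp [one_def]
  map_mul' a b := by
    simp only [mul_def, mul_one, Ext.mk.injEq, true_and]
    have : ∀ u : ℂˣ, a * b * u⁻¹ = a * u⁻¹ * (b * u⁻¹) * u := by
      intro u; rw [mul_mul_mul_comm, mul_assoc _ _ u]; simp
    exact this _

theorem io_inj : Function.Injective (io f) := by
  intro a b h
  simpa [io] using h

theorem io_mul (a : ℂˣ) (e : Ext f) : io f a * e = ⟨e.g, a * e.a⟩ := by
  have : ∀ u v : ℂˣ, a * u⁻¹ * v * u = a * v := by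
    intro u v; rw [mul_right_comm]; simp
  simp only [io, MonoidHom.coe_mk, OneHom.coe_mk, mul_def, one_mul, coc_one f e.g, this]

theorem mul_io (a : ℂˣ) (e : Ext f) : e * io f a = ⟨e.g, a * e.a⟩ := by
  have : ∀ u v : ℂˣ, v * (a * u⁻¹) * u = a * v := by
    intro u v; rw [mul_assoc]; simp [mul_comm]
  simp only [io, MonoidHom.coe_mk, OneHom.coe_mk, mul_def, mul_one, coc_one' f e.g, this]

/-- commutator formula for elements with commuting images -/
theorem comm_eq (e e' : Ext f) (h : e.g * e'.g = e'.g * e.g) :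
    ⁅e, e'⁆ = io f (f.1 e.g e'.g / f.1 e'.g e.g) := by
  have : e * e' = io f (f.1 e.g e'.g / f.1 e'.g e.g) * (e' * e) := by
    rw [io_mul, mul_def, mul_def]
    simp only [h, Ext.mk.injEq, true_and]
    have : ∀ u v s t : ℂˣ, s * t * u = u / v * (t * s * v) := by
      intro u v s t
      rw [mul_comm t s, mul_left_comm, div_mul_cancel]
    exact this _ _ _ _
  rw [commutatorElement_def, this]
  group

end Ext

theorem hall_witt {E : Type*} [Group E] (x y z : E) :
    (y * ⁅⁅y⁻¹, x⁆, z⁆ * y⁻¹) * (z * ⁅⁅z⁻¹, y⁆, x⁆ * z⁻¹) * (x * ⁅⁅x⁻¹, z⁆, y⁆ * x⁻¹) = 1 := by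
  simp only [commutatorElement_def]; group

theorem io_conj (f : Zc G) (a : ℂˣ) (e : Ext f) : e * Ext.io f a * e⁻¹ = Ext.io f a := by
  rw [Ext.mul_io, ← Ext.io_mul]; group

/-- The pairing -/
def bt {G : Type} (f : G → G → ℂˣ) (x z : G) : ℂˣ := f x z / f z x

theorem bt_mul_left (f : Zc G) (x y z : G) (hx : x * z = z * x) (hy : y * z = z * y) :
    bt f.1 (x * y) z = bt f.1 x z * bt f.1 y z := by
  have h1 := coc f x y z
  have h2 := coc f z x y
  have h3 := coc f x z y
  rw [hy] at h1
  rw [hx] at h3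
  unfold bt
  simp only [div_eq_mul_inv]
  have e1 : f.1 (x*y) z = (f.1 x y)⁻¹ * (f.1 y z * f.1 x (z*y)) := by rw [← h1]; simp
  have e2 : f.1 z (x*y) = (f.1 x y)⁻¹ * (f.1 z x * f.1 (z*x) y) := by rw [h2]; simp
  have e3 : f.1 x (z*y) = (f.1 z y)⁻¹ * (f.1 x z * f.1 (z*x) y) := by rw [h3]; simp
  rw [e1, e2, e3]
  generalize f.1 x y = a, f.1 y z = b, f.1 z x = c, f.1 z y = d, f.1 x z = e, f.1 (z*x) y = k
  ext
  push_cast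
  field_simp

theorem bt_symm {G : Type} (f : G → G → ℂˣ) (x z : G) : bt f x z = (bt f z x)⁻¹ := by
  simp [bt]

theorem bt_mul_right (f : Zc G) (x y z : G) (hx : x * z = z * x) (hy : y * z = z * y) :
    bt f.1 z (x * y) = bt f.1 z x * bt f.1 z y := by
  rw [bt_symm, bt_mul_left f x y z hx hy, bt_symm _ z x, bt_symm _ z y, mul_inv]

theorem bt_cob {f : G → G → ℂˣ} (hf : IsCob f) (x z : G) (h : x * z = z * x) : bt f x z = 1 := by
  obtain ⟨c, hc⟩ := hf
  simp [bt, hc, h, mul_comm]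

/-- Jacobi identity, in Hall-Witt form -/
theorem bt_jacobi (f : Zc G) (x y z : G)
    (hc : ∀ a b : G, ⁅a, b⁆ ∈ Subgroup.center G) :
    bt f.1 ⁅y⁻¹, x⁆ z * bt f.1 ⁅z⁻¹, y⁆ x * bt f.1 ⁅x⁻¹, z⁆ y = 1 := by
  have h := hall_witt (⟨x, 1⟩ : Ext f) ⟨y, 1⟩ ⟨z, 1⟩
  have key : ∀ u v w : G, ⁅⁅(⟨u, 1⟩ : Ext f)⁻¹, (⟨v, 1⟩ : Ext f)⁆, (⟨w, 1⟩ : Ext f)⁆ =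
      Ext.io f (bt f.1 ⁅u⁻¹, v⁆ w) := by
    intro u v w
    have e : (⁅(⟨u, 1⟩ : Ext f)⁻¹, (⟨v, 1⟩ : Ext f)⁆).g = ⁅u⁻¹, v⁆ := by
      change Ext.pr f ⁅(⟨u, 1⟩ : Ext f)⁻¹, (⟨v, 1⟩ : Ext f)⁆ = _
      rw [map_commutatorElement, map_inv]; rfl
    rw [Ext.comm_eq, e]
    · rfl
    · rw [e]; exact (Subgroup.mem_center_iff.1 (hc _ _) w).symm
  rw [key, key, key, io_conj, io_conj, io_conj, ← map_mul, ← map_mul] at h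
  exact Ext.io_inj f (h.trans (map_one _).symm)

/-- a symmetric cocycle on an abelian group is a coboundary -/
theorem sym_cob {V : Type} [CommGroup V] (f : Zc V) (hs : ∀ x y, f.1 x y = f.1 y x) :
    IsCob f.1 := by
  let _ : CommGroup (Ext f) :=
    { (inferInstance : Group (Ext f)) with
      mul_comm := by
        intro a b
        simp only [Ext.mul_def, hs a.g b.g, mul_comm a.g, mul_comm a.a] }
  let _ : DivisibleBy (Additive ℂˣ) ℤ := by
    refine @AddGroup.divisibleByIntOfDivisibleByNat _ _ ?_
    refine divisibleByOfSMulRightSurj _ _ ?_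
    intro n hn a
    obtain ⟨z, hz⟩ := IsAlgClosed.exists_pow_nat_eq (a.toMul : ℂ) (Nat.pos_of_ne_zero hn)
    have hz0 : z ≠ 0 := by
      rintro rfl
      rw [zero_pow hn] at hz
      exact a.toMul.ne_zero hz.symm
    exact ⟨Additive.ofMul (Units.mk0 z hz0), by
      apply Additive.toMul.injective
      ext
      simpa using hz⟩
  obtain ⟨r, hr⟩ := (Module.Baer.of_divisible (Additive ℂˣ)).extension_property_addMonoidHom
    (MonoidHom.toAdditive (Ext.io f)) (Ext.io_inj f) (AddMonoidHom.id _)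
  let R : Ext f →* ℂˣ := MonoidHom.toAdditive.symm r
  have hR : ∀ a, R (Ext.io f a) = a := fun a => DFunLike.congr_fun hr (Additive.ofMul a)
  refine ⟨fun x => R ⟨x, 1⟩, fun x y => ?_⟩
  have : (⟨x, 1⟩ : Ext f) * ⟨y, 1⟩ = Ext.io f (f.1 x y) * ⟨x * y, 1⟩ := by
    rw [Ext.io_mul, Ext.mul_def]; simp
  rw [eq_div_iff_mul_eq', ← map_mul, this, map_mul, hR, mul_comm]


/-- the coefficient module -/
noncomputable abbrev Cf (G : Type) [Group G] : Rep ℤ G := Rep.trivial ℤ G (Additive ℂˣ)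

def toM {G : Type} [Group G] (a : Cf G) : ℂˣ := Additive.toMul (show Additive ℂˣ from a)
def ofM {G : Type} [Group G] (a : ℂˣ) : Cf G := (Additive.ofMul a : Additive ℂˣ)

/-- comparison with the group cohomology of Mathlib -/
theorem card_schur (G : Type) [Group G] :
    Nat.card (groupCohomology (Rep.trivial ℤ G (Additive ℂˣ)) 2) = (Bc G).index := by
  let Φ : Zc G → groupCohomology.cocycles₂ (Cf G) := fun f =>
    ⟨fun q => ofM (f.1 q.1 q.2), by
      refine (groupCohomology.mem_cocycles₂_iff _).2 ?_
      intro g h j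
      have := coc f g h j
      change f.1 (g * h) j * f.1 g h = f.1 h j * f.1 g (h * j)
      rw [← this, mul_comm]⟩
  have hsurj : Function.Surjective Φ := by
    intro c
    refine ⟨⟨fun x y => toM (c.1 (x, y)), ?_⟩, ?_⟩
    · intro x y z
      have := (groupCohomology.mem_cocycles₂_iff c.1).1 c.2 x y z
      have h2 : toM (c.1 (x * y, z)) * toM (c.1 (x, y))
        = toM (c.1 (y, z)) * toM (c.1 (x, y * z)) := this
      change toM (c.1 (x, y)) * toM (c.1 (x * y, z)) = _
      rw [mul_comm]; exact h2
    · rfl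
  have hker : ∀ f g : Zc G, groupCohomology.H2π (Cf G) (Φ f) = groupCohomology.H2π (Cf G) (Φ g) ↔
      f⁻¹ * g ∈ Bc G := by
    intro f g
    rw [eq_comm, groupCohomology.H2π_eq_iff]
    constructor
    · rintro ⟨c, hc⟩
      refine ⟨fun x => toM (c x), fun x y => ?_⟩
      have h := congrFun hc (x, y)
      have h2 : toM (c y) / toM (c (x * y)) * toM (c x) = g.1 x y / f.1 x y := h
      change (f.1 x y)⁻¹ * g.1 x y = _
      rw [mul_comm, ← div_eq_mul_inv, ← h2, div_mul_eq_mul_div, mul_comm (toM (c y))]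
    · rintro ⟨c, hc⟩
      refine ⟨fun x => ofM (c x), ?_⟩
      funext q
      obtain ⟨x, y⟩ := q
      have h2 : (f.1 x y)⁻¹ * g.1 x y = _ := hc x y
      change c y / c (x * y) * c x = g.1 x y / f.1 x y
      rw [div_eq_mul_inv (g.1 x y), mul_comm (g.1 x y), h2, div_mul_eq_mul_div, mul_comm (c y)]
  rw [Subgroup.index]
  symm
  refine Nat.card_congr (Equiv.ofBijective
    (Quotient.lift (fun f => groupCohomology.H2π (Cf G) (Φ f)) ?_) ⟨?_, ?_⟩)
  · intro a b h
    exact (hker a b).2 (QuotientGroup.leftRel_apply.1 h)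
  · intro a b
    induction a using Quotient.inductionOn
    induction b using Quotient.inductionOn
    intro h
    exact Quotient.sound (QuotientGroup.leftRel_apply.2 ((hker _ _).1 h))
  · intro c
    induction c using groupCohomology.H2_induction_on with
    | h x =>
      obtain ⟨f, rfl⟩ := hsurj x
      exact ⟨Quotient.mk _ f, rfl⟩

/-- the coboundary of a cochain -/
def dc (c : G → ℂˣ) : Zc G := ⟨fun x y => c x * c y / c (x * y), by
  intro x y z
  beta_reduce
  rw [mul_assoc x y z]
  generalize c x = a, c y = b, c z = d, c (x*y) = e, c (x * (y * z)) = k, c (y * z) = l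
  ext; push_cast; field_simp⟩

theorem dc_mem (c : G → ℂˣ) : dc c ∈ Bc G := ⟨c, fun _ _ => rfl⟩

theorem dc_apply (c : G → ℂˣ) (x y : G) : (dc c).1 x y = c x * c y / c (x * y) := rfl

theorem zmul {z : G} (hz : z ∈ Subgroup.center G) (x : G) : x * z = z * x :=
  Subgroup.mem_center_iff.1 hz x

theorem step1 (f : Zc G) (h : ∀ x, ∀ z ∈ Subgroup.center G, bt f.1 x z = 1) :
    ∃ f' : Zc G, f⁻¹ * f' ∈ Bc G ∧ ∀ z ∈ Subgroup.center G, ∀ w ∈ Subgroup.center G,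
      f'.1 z w = 1 := by
  classical
  obtain ⟨c, hc⟩ := sym_cob (V := Subgroup.center G) ⟨fun x y => f.1 x y, fun x y z => f.2 x y z⟩
    (by
      intro x y
      have := h x.1 y.1 y.2
      exact div_eq_one.1 this)
  let c0 : G → ℂˣ := fun x => if h : x ∈ Subgroup.center G then c ⟨x, h⟩ else 1
  refine ⟨f * (dc c0)⁻¹, ?_, ?_⟩
  · rw [inv_mul_cancel_left]; exact inv_mem (dc_mem _)
  · intro z hz w hw
    have h1 := hc ⟨z, hz⟩ ⟨w, hw⟩
    have h2 : (dc c0).1 z w = f.1 z w := by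
      simp only [dc_apply, c0, hz, hw, mul_mem hz hw, dif_pos]
      exact h1.symm
    change f.1 z w * ((dc c0).1 z w)⁻¹ = 1
    rw [h2, mul_inv_cancel]

section
variable {V : Type} [CommGroup V] (π : G →* V) (hπ : Function.Surjective π)
  (hk : π.ker = Subgroup.center G)

def inf : Zc V →* Zc G where
  toFun g := ⟨fun x y => g.1 (π x) (π y), by
    intro x y z
    simp only [map_mul]
    exact g.2 _ _ _⟩
  map_one' := rfl
  map_mul' _ _ := rfl

theorem inf_apply (g : Zc V) (x y : G) : (inf π g).1 x y = g.1 (π x) (π y) := rfl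

theorem inf_cob (g : Zc V) (hg : IsCob g.1) : inf π g ∈ Bc G := by
  obtain ⟨c, hc⟩ := hg
  exact ⟨fun x => c (π x), fun x y => by beta_reduce; rw [inf_apply, hc, map_mul]⟩

include hπ hk

theorem exists_section : ∃ s : V → G, (∀ v, π (s v) = v) ∧
    ∀ x, (s (π x))⁻¹ * x ∈ Subgroup.center G := by
  obtain ⟨s, hs⟩ := hπ.hasRightInverse
  refine ⟨s, hs, fun x => ?_⟩
  rw [← hk, MonoidHom.mem_ker, map_mul, map_inv, hs, inv_mul_cancel]

theorem step2 (f : Zc G) (h : ∀ x, ∀ z ∈ Subgroup.center G, bt f.1 x z = 1)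
    (h1 : ∀ z ∈ Subgroup.center G, ∀ w ∈ Subgroup.center G, f.1 z w = 1) :
    ∃ f' : Zc G, f⁻¹ * f' ∈ Bc G ∧ ∀ z ∈ Subgroup.center G, ∀ x,
      f'.1 x z = 1 ∧ f'.1 z x = 1 := by
  obtain ⟨s, hs, hs'⟩ := exists_section π hπ hk
  let c : G → ℂˣ := fun x => f.1 (s (π x)) ((s (π x))⁻¹ * x)
  have h11 : f.1 1 1 = 1 := h1 1 (one_mem _) 1 (one_mem _)
  have hs1 : s 1 ∈ Subgroup.center G := by
    rw [← hk, MonoidHom.mem_ker, hs]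
  have hπz : ∀ z ∈ Subgroup.center G, π z = 1 := fun z hz => by
    rw [← hk] at hz; exact hz
  have hcz : ∀ z ∈ Subgroup.center G, c z = 1 := fun z hz => by
    simp only [c, hπz z hz]
    exact h1 _ hs1 _ (mul_mem (inv_mem hs1) hz)
  have hcs : ∀ v, c (s v) = 1 := fun v => by
    simp only [c, hs, inv_mul_cancel, coc_one', h11]
  let F := f * dc c
  have hF : ∀ x y, F.1 x y = f.1 x y * (c x * c y / c (x * y)) := fun _ _ => rfl
  have hFz : ∀ z ∈ Subgroup.center G, ∀ w ∈ Subgroup.center G, F.1 z w = 1 := by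
    intro z hz w hw
    rw [hF, h1 z hz w hw, hcz z hz, hcz w hw, hcz _ (mul_mem hz hw)]; simp
  have hFs : ∀ v, ∀ z ∈ Subgroup.center G, F.1 (s v) z = 1 := by
    intro v z hz
    rw [hF, hcs, hcz z hz]
    simp only [c, map_mul, hs, hπz z hz, mul_one, inv_mul_cancel_left]
    simp
  have hFx : ∀ x, ∀ z ∈ Subgroup.center G, F.1 x z = 1 := by
    intro x z hz
    have := coc F (s (π x)) ((s (π x))⁻¹ * x) z
    rw [hFs _ _ (hs' x), hFz _ (hs' x) _ hz, hFs _ _ (mul_mem (hs' x) hz)] at this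
    simpa using this
  refine ⟨F, ?_, fun z hz x => ⟨hFx x z hz, ?_⟩⟩
  · simp only [F, inv_mul_cancel_left]; exact dc_mem _
  · have h3 := hFx x z hz
    rw [hF] at h3 ⊢
    have h4 : f.1 x z = f.1 z x := div_eq_one.1 (h x z hz)
    rw [← zmul hz x, ← h4, mul_comm (c z)]; exact h3

theorem step3 (f : Zc G) (h : ∀ z ∈ Subgroup.center G, ∀ x, f.1 x z = 1 ∧ f.1 z x = 1) :
    ∃ g : Zc V, inf π g = f := by
  obtain ⟨s, hs, hs'⟩ := exists_section π hπ hk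
  have hr : ∀ x y, ∀ z ∈ Subgroup.center G, f.1 x (y * z) = f.1 x y := by
    intro x y z hz
    have := coc f x y z
    rw [(h z hz _).1, (h z hz _).1] at this
    simpa using this.symm
  have hl : ∀ x y, ∀ z ∈ Subgroup.center G, f.1 (x * z) y = f.1 x y := by
    intro x y z hz
    have := coc f z x y
    rw [(h z hz _).2, (h z hz _).2] at this
    rw [zmul hz]
    simpa using this
  have key : ∀ x y x' y', π x = π x' → π y = π y' → f.1 x y = f.1 x' y' := by
    intro x y x' y' hx hy
    have e1 : x'⁻¹ * x ∈ Subgroup.center G := by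
      rw [← hk, MonoidHom.mem_ker, map_mul, map_inv, hx, inv_mul_cancel]
    have e2 : y'⁻¹ * y ∈ Subgroup.center G := by
      rw [← hk, MonoidHom.mem_ker, map_mul, map_inv, hy, inv_mul_cancel]
    have := hl x' y _ e1
    rw [mul_inv_cancel_left] at this
    rw [this]
    have := hr x' y' _ e2
    rw [mul_inv_cancel_left] at this
    exact this
  refine ⟨⟨fun u v => f.1 (s u) (s v), ?_⟩, ?_⟩
  · intro u v w
    change f.1 (s u) (s v) * f.1 (s (u * v)) (s w) = f.1 (s v) (s w) * f.1 (s u) (s (v * w))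
    rw [key (s (u * v)) (s w) (s u * s v) (s w) (by simp [hs]) rfl,
      key (s u) (s (v * w)) (s u) (s v * s w) rfl (by simp [hs])]
    exact coc f _ _ _
  · ext x y : 3
    exact key _ _ _ _ (by simp [hs]) (by simp [hs])

theorem inflate (f : Zc G) (h : ∀ x, ∀ z ∈ Subgroup.center G, bt f.1 x z = 1) :
    ∃ g : Zc V, f⁻¹ * inf π g ∈ Bc G := by
  obtain ⟨f1, h1, h1'⟩ := step1 f h
  have hb : ∀ x, ∀ z ∈ Subgroup.center G, bt f1.1 x z = 1 := by
    intro x z hz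
    have e := bt_cob h1 x z (zmul hz x)
    have e2 := h x z hz
    simp only [bt, Subgroup.coe_mul, Subgroup.coe_inv, Pi.mul_apply, Pi.inv_apply] at e e2 ⊢
    rw [div_eq_one] at e e2 ⊢
    rw [e2] at e
    exact mul_left_cancel e
  obtain ⟨f2, h2, h2'⟩ := step2 π hπ hk f1 hb h1'
  obtain ⟨g, rfl⟩ := step3 π hπ hk f2 h2'
  refine ⟨g, ?_⟩
  have := mul_mem h1 h2
  rwa [mul_assoc, mul_inv_cancel_left] at this

/-- transgression -/
theorem transg (X : G → ℂˣ)
    (hX : ∀ z ∈ Subgroup.center G, ∀ w ∈ Subgroup.center G, X (z * w) = X z * X w)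
    (g : Zc V) (hg : ∀ x y, bt g.1 (π x) (π y) = X ⁅x, y⁆) : inf π g ∈ Bc G := by
  obtain ⟨s, hs, hs'⟩ := exists_section π hπ hk
  have hmem : ∀ x, π x = 1 → x ∈ Subgroup.center G := fun x hx => by
    rw [← hk]; exact hx
  have ht : ∀ u v, s u * s v * (s (u * v))⁻¹ ∈ Subgroup.center G := fun u v =>
    hmem _ (by simp [hs])
  let t : Zc V := ⟨fun u v => X (s u * s v * (s (u * v))⁻¹), by
    intro u v w
    change X _ * X _ = X _ * X _
    rw [← hX _ (ht _ _) _ (ht _ _), ← hX _ (ht _ _) _ (ht _ _), ← zmul (ht v w)]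
    congr 1
    have e := zmul (ht v w) (s u)
    rw [mul_assoc u v w]
    calc _ = s u * (s v * s w * (s (v * w))⁻¹) * s (v * w) * (s (u * (v * w)))⁻¹ := by group
      _ = _ := by rw [e]; group
      _ = _ := (zmul (ht v w) _).symm⟩
  have htb : ∀ u v, t.1 u v = bt g.1 u v * t.1 v u := by
    intro u v
    have e := hg (s u) (s v)
    rw [hs, hs] at e
    rw [e]
    change X _ = X _ * X _
    have hc : ⁅s u, s v⁆ ∈ Subgroup.center G := hmem _ (by
      rw [map_commutatorElement, commutatorElement_eq_one_iff_mul_comm, mul_comm])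
    rw [← hX _ hc _ (ht _ _), commutatorElement_def, mul_comm v u]
    congr 1
    group
  have hsym : IsCob (g * t⁻¹).1 := by
    apply sym_cob
    intro u v
    change g.1 u v * (t.1 u v)⁻¹ = g.1 v u * (t.1 v u)⁻¹
    rw [htb u v, bt]
    generalize g.1 u v = a, g.1 v u = b, t.1 v u = c
    ext; push_cast; field_simp
  have h1 := inf_cob π _ hsym
  have h2 : inf π t ∈ Bc G := by
    have hz : ∀ x, x * (s (π x))⁻¹ ∈ Subgroup.center G := fun x => hmem _ (by simp [hs])
    refine ⟨fun x => (X (x * (s (π x))⁻¹))⁻¹, fun x y => ?_⟩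
    change X (s (π x) * s (π y) * (s (π x * π y))⁻¹) = (X (x * (s (π x))⁻¹))⁻¹ * (X (y * (s (π y))⁻¹))⁻¹ /
      (X (x * y * (s (π (x * y)))⁻¹))⁻¹
    have e : X (x * y * (s (π (x * y)))⁻¹) = X (x * (s (π x))⁻¹) * X (y * (s (π y))⁻¹) *
        X (s (π x) * s (π y) * (s (π x * π y))⁻¹) := by
      rw [← hX _ (hz _) _ (hz _), ← hX _ (mul_mem (hz _) (hz _)) _ (ht _ _), map_mul]
      congr 1
      have e2 := zmul (hz y) (s (π x))
      calc x * y * (s (π x * π y))⁻¹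
          = x * (s (π x))⁻¹ * (s (π x) * (y * (s (π y))⁻¹)) * s (π y) * (s (π x * π y))⁻¹ := by group
        _ = _ := by rw [e2]; group
    rw [e]
    generalize X (x * (s (π x))⁻¹) = a, X (y * (s (π y))⁻¹) = b,
        X (s (π x) * s (π y) * (s (π x * π y))⁻¹) = c
    ext; push_cast; field_simp
  have := mul_mem h1 h2
  rwa [← map_mul, inv_mul_cancel_right] at this

end

/-- alternating bicharacters -/
def Alt (G : Type) [Group G] : Type := {b : G → G → ℂˣ // (∀ x, b x x = 1) ∧
  (∀ x y z, b (x * y) z = b x z * b y z) ∧ ∀ x y z, b x (y * z) = b x y * b x z}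

def Alt.left (b : Alt G) (y : G) : G →* ℂˣ := MonoidHom.mk' (fun x => b.1 x y) (fun x x' => b.2.2.1 x x' y)
def Alt.right (b : Alt G) (x : G) : G →* ℂˣ := MonoidHom.mk' (fun y => b.1 x y) (fun y y' => b.2.2.2 x y y')

theorem Alt.swap (b : Alt G) (x y : G) : b.1 x y = (b.1 y x)⁻¹ := by
  have h := b.2.1 (x * y)
  rw [b.2.2.1, b.2.2.2, b.2.2.2, b.2.1, b.2.1, one_mul, mul_one] at h
  exact eq_inv_of_mul_eq_one_left h

theorem card_pairs (d : ℕ) : Nat.card (Σ j : Fin d, Fin j.val) = d * (d - 1) / 2 := by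
  rw [Nat.card_eq_fintype_card, Fintype.card_sigma]
  simp only [Fintype.card_fin]
  rw [← Finset.sum_range_id, Finset.sum_range]

theorem alt_card (p d : ℕ) [NeZero p] (e : Fin d → G) (he : Subgroup.closure (Set.range e) = ⊤)
    (hp : ∀ x : G, x ^ p ∈ commutator G) :
    Finite (Alt G) ∧ Nat.card (Alt G) ≤ p ^ (d * (d - 1) / 2) := by
  have hroot : ∀ (b : Alt G) x y, b.1 x y ∈ rootsOfUnity p ℂ := by
    intro b x y
    rw [mem_rootsOfUnity]
    have h1 : (b.left y) (x ^ p) = 1 := Abelianization.commutator_subset_ker (b.left y) (hp x)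
    rw [map_pow] at h1
    exact h1
  let Φ : Alt G → ((Σ j : Fin d, Fin j.val) → rootsOfUnity p ℂ) := fun b q =>
    ⟨b.1 (e ⟨q.2.1, q.2.2.trans q.1.2⟩) (e q.1), hroot _ _ _⟩
  have hΦ : Function.Injective Φ := by
    intro b b' h
    have h1 : ∀ i j : Fin d, i < j → b.1 (e i) (e j) = b'.1 (e i) (e j) := by
      intro i j hij
      have := congrFun h ⟨j, ⟨i.1, hij⟩⟩
      exact congrArg Subtype.val this
    have h2 : ∀ i j : Fin d, b.1 (e i) (e j) = b'.1 (e i) (e j) := by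
      intro i j
      rcases lt_trichotomy i j with hij | hij | hij
      · exact h1 i j hij
      · rw [hij, b.2.1, b'.2.1]
      · rw [b.swap, b'.swap, h1 j i hij]
    have h3 : ∀ i y, b.1 (e i) y = b'.1 (e i) y := by
      intro i y
      have : b.right (e i) = b'.right (e i) := by
        apply MonoidHom.eq_of_eqOn_dense he
        rintro _ ⟨j, rfl⟩
        exact h2 i j
      exact DFunLike.congr_fun this y
    apply Subtype.ext
    funext x y
    have : b.left y = b'.left y := by
      apply MonoidHom.eq_of_eqOn_dense he
      rintro _ ⟨j, rfl⟩
      exact h3 j y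
    exact DFunLike.congr_fun this x
  have hfin : Finite (Alt G) := Finite.of_injective Φ hΦ
  refine ⟨hfin, (Nat.card_le_card_of_injective Φ hΦ).trans ?_⟩
  rw [Nat.card_fun, card_pairs]
  exact Nat.pow_le_pow_left (card_rootsOfUnity ℂ p) _

theorem comm_mul_left (hc : ∀ a b : G, ⁅a, b⁆ ∈ Subgroup.center G) (x y z : G) :
    ⁅x * y, z⁆ = ⁅x, z⁆ * ⁅y, z⁆ := by
  have := zmul (hc y z) x
  calc ⁅x * y, z⁆ = x * ⁅y, z⁆ * x⁻¹ * ⁅x, z⁆ := by simp only [commutatorElement_def]; group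
    _ = ⁅y, z⁆ * ⁅x, z⁆ := by rw [this]; group
    _ = _ := zmul (hc x z) _

theorem comm_mul_right (hc : ∀ a b : G, ⁅a, b⁆ ∈ Subgroup.center G) (x y z : G) :
    ⁅x, y * z⁆ = ⁅x, y⁆ * ⁅x, z⁆ := by
  rw [← commutatorElement_inv, comm_mul_left hc, mul_inv_rev, commutatorElement_inv,
    commutatorElement_inv, zmul (hc x y)]

section
variable {V : Type} [CommGroup V] (π : G →* V) (hπ : Function.Surjective π)
  (hk : π.ker = Subgroup.center G)
include hπ hk

theorem K_card (hc : ∀ a b : G, ⁅a, b⁆ ∈ Subgroup.center G)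
    (hzc : Subgroup.center G = commutator G) (K : Subgroup (Zc G))
    (hK : ∀ f ∈ K, ∀ x, ∀ z ∈ Subgroup.center G, bt f.1 x z = 1) [Finite (Alt G)] :
    (Bc G).relIndex K ≠ 0 ∧
      (Bc G).relIndex K * Nat.card (Subgroup.center G →* ℂˣ) ≤ Nat.card (Alt G) := by
  classical
  let Q := K ⧸ (Bc G).subgroupOf K
  have hex : ∀ q : Q, ∃ g : Zc V, (q.out : Zc G)⁻¹ * inf π g ∈ Bc G := fun q =>
    inflate π hπ hk _ (hK _ q.out.2)
  choose g hg using hex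
  let Ψ : Q × (Subgroup.center G →* ℂˣ) → Alt G := fun q =>
    ⟨fun x y => bt (g q.1).1 (π x) (π y) * q.2 ⟨⁅x, y⁆, hc x y⟩, by
      refine ⟨?_, ?_, ?_⟩ <;> beta_reduce
      · intro x
        have : (⟨⁅x, x⁆, hc x x⟩ : Subgroup.center G) = 1 := Subtype.ext (commutatorElement_self x)
        rw [this]; simp [bt]
      · intro x y z
        have : (⟨⁅x * y, z⁆, hc _ _⟩ : Subgroup.center G) = ⟨⁅x, z⁆, hc _ _⟩ * ⟨⁅y, z⁆, hc _ _⟩ :=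
          Subtype.ext (comm_mul_left hc x y z)
        rw [this, map_mul, map_mul, bt_mul_left _ _ _ _ (mul_comm _ _) (mul_comm _ _),
          mul_mul_mul_comm]
      · intro x y z
        have : (⟨⁅x, y * z⁆, hc _ _⟩ : Subgroup.center G) = ⟨⁅x, y⁆, hc _ _⟩ * ⟨⁅x, z⁆, hc _ _⟩ :=
          Subtype.ext (comm_mul_right hc x y z)
        rw [this, map_mul, map_mul, bt_mul_right _ _ _ _ (mul_comm _ _) (mul_comm _ _),
          mul_mul_mul_comm]⟩
  have hΨ : Function.Injective Ψ := by
    rintro ⟨q, χ⟩ ⟨q', χ'⟩ h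
    have h1 : ∀ x y, bt (g q).1 (π x) (π y) * χ ⟨⁅x, y⁆, hc x y⟩ =
        bt (g q').1 (π x) (π y) * χ' ⟨⁅x, y⁆, hc x y⟩ := fun x y =>
      congrFun (congrFun (congrArg Subtype.val h) x) y
    have hq : q = q' := by
      let X : G → ℂˣ := fun x => if h : x ∈ Subgroup.center G then χ ⟨x, h⟩ / χ' ⟨x, h⟩ else 1
      have hX := transg π hπ hk X (by
        intro z hz w hw
        simp only [X, hz, hw, mul_mem hz hw, dif_pos]
        have : (⟨z * w, mul_mem hz hw⟩ : Subgroup.center G) = ⟨z, hz⟩ * ⟨w, hw⟩ := rfl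
        rw [this, map_mul, map_mul, mul_div_mul_comm]) ((g q)⁻¹ * g q') (by
        intro x y
        simp only [X, hc x y, dif_pos]
        have := h1 x y
        have e : bt ((g q)⁻¹ * g q').1 (π x) (π y) =
          bt (g q').1 (π x) (π y) / bt (g q).1 (π x) (π y) := by
          simp only [bt, Subgroup.coe_mul, Subgroup.coe_inv, Pi.mul_apply, Pi.inv_apply]
          generalize (g q).1 (π x) (π y) = a, (g q).1 (π y) (π x) = b,
            (g q').1 (π x) (π y) = c, (g q').1 (π y) (π x) = d
          ext; push_cast; field_simp
        rw [e, div_eq_div_iff_mul_eq_mul, mul_comm (χ _), this])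
      rw [map_mul, map_inv] at hX
      have h3 := mul_mem (mul_mem (hg q) hX) (inv_mem (hg q'))
      have h4 : (q.out : Zc G)⁻¹ * q'.out ∈ Bc G := by
        convert h3 using 1
        group
      rw [← q.out_eq, ← q'.out_eq]
      exact QuotientGroup.eq.2 h4
    subst hq
    have h5 : ∀ x y, χ ⟨⁅x, y⁆, hc x y⟩ = χ' ⟨⁅x, y⁆, hc x y⟩ := fun x y =>
      mul_left_cancel (h1 x y)
    have hχ : χ = χ' := by
      have key : ∀ z (hz : z ∈ commutator G), ∀ hz' : z ∈ Subgroup.center G,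
          χ ⟨z, hz'⟩ = χ' ⟨z, hz'⟩ := by
        intro z hz
        rw [commutator_eq_closure] at hz
        induction hz using Subgroup.closure_induction with
        | mem z hz =>
          obtain ⟨x, y, rfl⟩ := hz
          intro _; exact h5 x y
        | one => 
          intro h
          exact (map_one χ).trans (map_one χ').symm
        | mul a b ha hb iha ihb => 
          intro h
          have ha' : a ∈ Subgroup.center G := by rw [hzc, commutator_eq_closure]; exact ha
          have hb' : b ∈ Subgroup.center G := by rw [hzc, commutator_eq_closure]; exact hb
          have : (⟨a * b, h⟩ : Subgroup.center G) = ⟨a, ha'⟩ * ⟨b, hb'⟩ := rfl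
          rw [this, map_mul, map_mul, iha, ihb]
        | inv a ha iha =>
          intro h
          have ha' : a ∈ Subgroup.center G := by rw [hzc, commutator_eq_closure]; exact ha
          have : (⟨a⁻¹, h⟩ : Subgroup.center G) = ⟨a, ha'⟩⁻¹ := rfl
          rw [this, map_inv, map_inv, iha]
      ext z
      rw [key z.1 (hzc ▸ z.2) z.2]
    rw [hχ]
  have hfin : Finite (Q × (Subgroup.center G →* ℂˣ)) := Finite.of_injective Ψ hΨ
  have hfin2 : Finite Q := Finite.of_injective (fun q => (q, (1 : Subgroup.center G →* ℂˣ)))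
    (fun a b h => congrArg Prod.fst h)
  have hrel : (Bc G).relIndex K = Nat.card Q := rfl
  rw [hrel]
  refine ⟨Nat.card_pos.ne', ?_⟩
  rw [← Nat.card_prod]
  exact Nat.card_le_card_of_injective Ψ hΨ
end

/-- pairing with a fixed element, as a character of the center -/
def th (u : G) : Zc G →* (Subgroup.center G →* ℂˣ) :=
  MonoidHom.mk' (fun f => MonoidHom.mk' (fun z => bt f.1 u z.1) (fun z w =>
    bt_mul_right f z.1 w.1 u (zmul z.2 u).symm (zmul w.2 u).symm)) (by
    intro f g
    ext z : 1
    change (f.1 u z * g.1 u z) / (f.1 z u * g.1 z u) = (f.1 u z / f.1 z u) * (g.1 u z / g.1 z u)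
    rw [mul_div_mul_comm])

theorem th_apply (u : G) (f : Zc G) (z : Subgroup.center G) : th u f z = bt f.1 u z.1 := rfl

theorem comm_inv_left (hc : ∀ a b : G, ⁅a, b⁆ ∈ Subgroup.center G) (x y : G) :
    ⁅y⁻¹, x⁆ = ⁅x, y⁆ := by
  have h := comm_mul_left hc y⁻¹ y x
  rw [inv_mul_cancel, commutatorElement_one_left] at h
  rw [← commutatorElement_inv y x]
  exact eq_inv_of_mul_eq_one_left h.symm

theorem th_jacobi (hc : ∀ a b : G, ⁅a, b⁆ ∈ Subgroup.center G) (f : Zc G) (x y z : G) :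
    th x f ⟨⁅y, z⁆, hc y z⟩ * th y f ⟨⁅z, x⁆, hc z x⟩ * th z f ⟨⁅x, y⁆, hc x y⟩ = 1 := by
  have h := bt_jacobi f x y z hc
  rw [comm_inv_left hc, comm_inv_left hc, comm_inv_left hc] at h
  simp only [th_apply]
  rw [bt_symm _ x, bt_symm _ y, bt_symm _ z, ← mul_inv, ← mul_inv, inv_eq_one, ← h]
  rw [mul_comm (bt _ ⁅x, y⁆ z * _), mul_comm (bt _ ⁅x, y⁆ z), mul_comm (bt _ ⁅y, z⁆ x), mul_assoc]

theorem card_chars [Finite G] :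
    Nat.card (Subgroup.center G →* ℂˣ) = Nat.card (Subgroup.center G) := by
  have : NeZero (Monoid.exponent (Subgroup.center G)) := ⟨Monoid.exponent_ne_zero_of_finite⟩
  exact CommGroup.card_monoidHom_of_hasEnoughRootsOfUnity (Subgroup.center G) ℂ

theorem exists_uww {p : ℕ} (hp : p.Prime) [Finite G]
    (hc : ∀ a b : G, ⁅a, b⁆ ∈ Subgroup.center G)
    (hzc : Subgroup.center G = commutator G)
    (hz : Nat.card (Subgroup.center G) = p ^ 2)
    (he : ∀ a b : G, ⁅a, b⁆ ^ p = 1) :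
    ∃ u w w' : G, ⁅u, w⁆ ≠ 1 ∧ Subgroup.closure {⁅u, w⁆, ⁅u, w'⁆} = Subgroup.center G := by
  have hzp : ∀ a b : G, Nat.card (Subgroup.zpowers ⁅a, b⁆) ≤ p := fun a b => by
    rw [Nat.card_zpowers]
    exact Nat.le_of_dvd hp.pos (orderOf_dvd_of_pow_eq_one (he a b))
  have hlt : p < p ^ 2 := by
    rw [pow_two]; exact lt_mul_of_one_lt_left hp.pos hp.one_lt
  have hex : ∀ H : Subgroup G, Nat.card H ≤ p → ∃ x y : G, ⁅x, y⁆ ∉ H := by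
    intro H hH
    by_contra hcon
    push Not at hcon
    have : Subgroup.center G ≤ H := by
      rw [hzc, commutator_eq_closure, Subgroup.closure_le]
      rintro _ ⟨x, y, rfl⟩
      exact hcon x y
    have := Subgroup.card_le_of_le this
    omega
  obtain ⟨x, y, hxy⟩ := hex ⊥ (by rw [Subgroup.card_bot]; exact hp.one_lt.le)
  rw [Subgroup.mem_bot] at hxy
  obtain ⟨x', y', hb⟩ := hex _ (hzp x y)
  have hb1 : ⁅x', y'⁆ ≠ 1 := fun h => hb (h ▸ one_mem _)
  by_contra hcon
  push Not at hcon
  have star : ∀ u w w' : G, ⁅u, w⁆ ≠ 1 → ⁅u, w'⁆ ∈ Subgroup.zpowers ⁅u, w⁆ := by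
    intro u w w' h
    by_contra hn
    refine hcon u w w' h ?_
    have hle : Subgroup.closure {⁅u, w⁆, ⁅u, w'⁆} ≤ Subgroup.center G := by
      rw [Subgroup.closure_le]
      rintro _ (rfl | rfl)
      · exact hc _ _
      · exact hc _ _
    have hmw : ⁅u, w⁆ ∈ Subgroup.closure {⁅u, w⁆, ⁅u, w'⁆} := Subgroup.subset_closure (by simp)
    have hmw' : ⁅u, w'⁆ ∈ Subgroup.closure {⁅u, w⁆, ⁅u, w'⁆} := Subgroup.subset_closure (by simp)
    have hdvd := Subgroup.card_dvd_of_le hle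
    rw [hz, Nat.dvd_prime_pow hp] at hdvd
    obtain ⟨k, hk, hk'⟩ := hdvd
    have hzle : Subgroup.zpowers ⁅u, w⁆ ≤ Subgroup.closure {⁅u, w⁆, ⁅u, w'⁆} := by
      rwa [Subgroup.zpowers_le]
    have hcardz : Nat.card (Subgroup.zpowers ⁅u, w⁆) = p := by
      rw [Nat.card_zpowers]
      exact orderOf_eq_prime_iff (hp := ⟨hp⟩) |>.2 ⟨he u w, h⟩
    apply Subgroup.eq_of_le_of_card_ge hle
    rw [hz, hk']
    apply Nat.pow_le_pow_right hp.pos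
    by_contra hk2
    have : Nat.card (Subgroup.closure {⁅u, w⁆, ⁅u, w'⁆}) ≤ p := by
      rw [hk']
      calc p ^ k ≤ p ^ 1 := Nat.pow_le_pow_right hp.pos (by omega)
        _ = p := pow_one p
    have heq := Subgroup.eq_of_le_of_card_ge hzle (by rw [hcardz]; exact this)
    rw [heq] at hn
    exact hn hmw'
  have hu : ∃ u : G, ⁅x, u⁆ ≠ 1 ∧ ⁅x', u⁆ ≠ 1 := by
    by_cases h1 : ⁅x', y⁆ = 1
    · by_cases h2 : ⁅x, y'⁆ = 1
      · refine ⟨y * y', ?_, ?_⟩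
        · rw [comm_mul_right hc, h2, mul_one]; exact hxy
        · rw [comm_mul_right hc, h1, one_mul]; exact hb1
      · exact ⟨y', h2, hb1⟩
    · exact ⟨y, hxy, h1⟩
  obtain ⟨u, hu1, hu2⟩ := hu
  have k1 := star x y u hxy
  have k2 := star u x x' (by rw [← commutatorElement_inv x u]; exact inv_ne_one.2 hu1)
  have k3 := star x' u y' hu2
  apply hb
  have e1 : ⁅u, x⁆ ∈ Subgroup.zpowers ⁅x, y⁆ := by
    rw [← commutatorElement_inv x u]; exact inv_mem k1
  have e2 : ⁅u, x'⁆ ∈ Subgroup.zpowers ⁅x, y⁆ := (Subgroup.zpowers_le.2 e1) k2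
  have e3 : ⁅x', u⁆ ∈ Subgroup.zpowers ⁅x, y⁆ := by
    rw [← commutatorElement_inv u x']; exact inv_mem e2
  exact (Subgroup.zpowers_le.2 e3) k3

abbrev Ch (G : Type) [Group G] : Type := Subgroup.center G →* ℂˣ

/-- triples of characters -/
def T3 (G : Type) [Group G] : Type := Ch G × Ch G × Ch G

instance : CommGroup (T3 G) := inferInstanceAs (CommGroup (Ch G × Ch G × Ch G))

def Lsub (a b c : Subgroup.center G) : Subgroup (T3 G) where
  carrier := {q | q.1 a * (q.2.1 b * q.2.2 c) = 1}
  one_mem' := by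
    change (1 : ℂˣ) * (1 * 1) = 1
    simp
  mul_mem' := by
    intro x y hx hy
    simp only [Set.mem_ofPred_eq] at hx hy ⊢
    change x.1 a * y.1 a * (x.2.1 b * y.2.1 b * (x.2.2 c * y.2.2 c)) = 1
    rw [mul_mul_mul_comm (x.2.1 _), mul_mul_mul_comm, hx, hy, mul_one]
  inv_mem' := by
    intro x hx
    simp only [Set.mem_ofPred_eq] at hx ⊢
    change (x.1 a)⁻¹ * ((x.2.1 b)⁻¹ * (x.2.2 c)⁻¹) = 1
    rw [← mul_inv, ← mul_inv, hx, inv_one]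

theorem Lsub_card {p : ℕ} (hp : p.Prime) [Finite G] (hH : Nat.card (Ch G) = p ^ 2)
    (a b c : Subgroup.center G) (hx : c ≠ 1) : Nat.card (Lsub a b c) ≤ p ^ 5 := by
  have hHf : Finite (Ch G) := by
    apply Nat.finite_of_card_ne_zero; rw [hH]; exact pow_ne_zero _ hp.ne_zero
  have hT3 : Finite (T3 G) := inferInstanceAs (Finite (Ch G × Ch G × Ch G))
  have hLne : Lsub a b c ≠ ⊤ := by
    intro htop
    have : NeZero (Monoid.exponent (Subgroup.center G)) := ⟨Monoid.exponent_ne_zero_of_finite⟩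
    obtain ⟨φ, hφ⟩ := CommGroup.exists_apply_ne_one_of_hasEnoughRootsOfUnity (Subgroup.center G) ℂ hx
    apply hφ
    have h1 : ((1, 1, φ) : T3 G) ∈ Lsub a b c := by rw [htop]; trivial
    have h2 : 1 * (1 * φ c) = 1 := h1
    simpa using h2
  have hd := Subgroup.card_subgroup_dvd_card (Lsub a b c)
  have h6 : Nat.card (T3 G) = p ^ 6 := by
    rw [T3, Nat.card_prod, Nat.card_prod, hH]; ring
  rw [h6, Nat.dvd_prime_pow hp] at hd
  obtain ⟨k, hk, hk'⟩ := hd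
  rw [hk']
  apply Nat.pow_le_pow_right hp.pos
  by_contra hk5
  have : k = 6 := by omega
  subst this
  exact hLne (Subgroup.eq_top_of_card_eq _ (by rw [hk', h6]))

def Th (u w w' : G) : Zc G →* T3 G :=
  MonoidHom.mk' (fun f => (th u f, th w f, th w' f)) (fun f g => by rw [map_mul, map_mul, map_mul]; rfl)

theorem Th_apply (u w w' : G) (f : Zc G) :
    Th u w w' f = ((th u f, th w f, th w' f) : Ch G × Ch G × Ch G) := rfl

theorem Th_range (hc : ∀ a b : G, ⁅a, b⁆ ∈ Subgroup.center G) (u w w' : G) :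
    (Th u w w').range ≤ Lsub ⟨⁅w, w'⁆, hc _ _⟩ ⟨⁅w', u⁆, hc _ _⟩ ⟨⁅u, w⁆, hc _ _⟩ := by
  rintro _ ⟨f, rfl⟩
  have := th_jacobi hc f u w w'
  change th u f _ * (th w f _ * th w' f _) = 1
  rw [← mul_assoc]; exact this

theorem Th_idx {p : ℕ} (hp : p.Prime) [Finite G] (hH : Nat.card (Ch G) = p ^ 2)
    (hc : ∀ a b : G, ⁅a, b⁆ ∈ Subgroup.center G) (u w w' : G) (hne : ⁅u, w⁆ ≠ 1) :
    (Th u w w').ker.index ≠ 0 ∧ (Th u w w').ker.index ≤ p ^ 5 := by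
  have hHf : Finite (Ch G) := by
    apply Nat.finite_of_card_ne_zero; rw [hH]; exact pow_ne_zero _ hp.ne_zero
  have hT3 : Finite (T3 G) := inferInstanceAs (Finite (Ch G × Ch G × Ch G))
  have hx : (⟨⁅u, w⁆, hc u w⟩ : Subgroup.center G) ≠ 1 := fun h => hne (congrArg Subtype.val h)
  have hidx : (Th u w w').ker.index = Nat.card (Th u w w').range := Subgroup.index_ker _
  rw [hidx]
  refine ⟨Nat.card_pos.ne', ?_⟩
  exact (Subgroup.card_le_of_le (Th_range hc u w w')).trans (Lsub_card hp hH _ _ _ hx)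

theorem Bc_le_Th (u w w' : G) : Bc G ≤ (Th u w w').ker := by
  intro f hf
  have h0 : ∀ v, th v f = 1 := fun v => by
    ext z : 1
    exact bt_cob hf v z.1 (zmul z.2 v)
  rw [MonoidHom.mem_ker, Th_apply, h0, h0, h0]; rfl

theorem Th_ker (hc : ∀ a b : G, ⁅a, b⁆ ∈ Subgroup.center G) (u w w' : G) 
    (hcl : Subgroup.closure {⁅u, w⁆, ⁅u, w'⁆} = Subgroup.center G) :
    ∀ f ∈ (Th u w w').ker, ∀ x, ∀ z ∈ Subgroup.center G, bt f.1 x z = 1 := by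
  intro f hf x z hz
  rw [MonoidHom.mem_ker] at hf
  have hu : th u f = 1 := congrArg Prod.fst hf
  have hw : th w f = 1 := congrArg (fun q => q.2.1) hf
  have hw' : th w' f = 1 := congrArg (fun q => q.2.2) hf
  have j1 := th_jacobi hc f x u w
  have j2 := th_jacobi hc f x u w'
  rw [hu, hw] at j1
  rw [hu, hw'] at j2
  simp only [MonoidHom.one_apply, mul_one] at j1 j2
  have hle : Subgroup.closure {⁅u, w⁆, ⁅u, w'⁆} ≤
      ((th x f).ker).map (Subgroup.center G).subtype := by
    rw [Subgroup.closure_le]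
    rintro _ (rfl | rfl)
    · exact ⟨_, j1, rfl⟩
    · exact ⟨_, j2, rfl⟩
  obtain ⟨⟨z', hz'⟩, h1, rfl⟩ := hle (show z ∈ Subgroup.closure {⁅u, w⁆, ⁅u, w'⁆} by rw [hcl]; exact hz)
  exact h1

theorem upper {p d : ℕ} (hp : p.Prime) [Finite G]
    (hc : ∀ a b : G, ⁅a, b⁆ ∈ Subgroup.center G)
    (hzc : Subgroup.center G = commutator G)
    (hz : Nat.card (Subgroup.center G) = p ^ 2)
    (hpw : ∀ x : G, x ^ p ∈ commutator G)
    (e : Fin d → G) (hgen : Subgroup.closure (Set.range e) = ⊤) :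
    (Bc G).index ≠ 0 ∧ (Bc G).index * p ^ 2 ≤ p ^ (d * (d - 1) / 2) * p ^ 5 := by
  have : NeZero p := ⟨hp.ne_zero⟩
  have he : ∀ a b : G, ⁅a, b⁆ ^ p = 1 := by
    intro a b
    have h1 : ∀ n : ℕ, ⁅a ^ n, b⁆ = ⁅a, b⁆ ^ n := by
      intro n
      induction n with
      | zero => simp
      | succ n ih => rw [pow_succ, comm_mul_left hc, ih, pow_succ]
    rw [← h1, commutatorElement_eq_one_iff_mul_comm]
    exact (zmul (hzc ▸ hpw a) b).symm
  obtain ⟨u, w, w', hne, hcl⟩ := exists_uww hp hc hzc hz he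
  obtain ⟨hfin, hcard⟩ := alt_card p d e hgen hpw
  have hH : Nat.card (Ch G) = p ^ 2 := by rw [card_chars, hz]
  obtain ⟨hi0, hi5⟩ := Th_idx hp hH hc u w w' hne
  have hB := Bc_le_Th u w w'
  obtain ⟨hr0, hr⟩ := K_card Abelianization.of QuotientGroup.mk_surjective
    (by rw [hzc]; exact QuotientGroup.ker_mk' _) hc hzc (Th u w w').ker (Th_ker hc u w w' hcl)
  rw [← Subgroup.relIndex_mul_index hB]
  refine ⟨mul_ne_zero hr0 hi0, ?_⟩
  rw [hH] at hr
  calc _ = ((Bc G).relIndex (Th u w w').ker * p ^ 2) * (Th u w w').ker.index := by ring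
    _ ≤ p ^ (d * (d - 1) / 2) * p ^ 5 := Nat.mul_le_mul (hr.trans hcard) hi5

section lower
variable {p n : ℕ} (ψ : Multiplicative (ZMod p) →* ℂˣ) (k : Fin n → G → ZMod p)

abbrev Pr (n : ℕ) : Type := Σ j : Fin n, Fin j.val

def Pr.fst {n : ℕ} (q : Pr n) : Fin n := ⟨q.2.1, q.2.2.trans q.1.2⟩

/-- the bilinear form attached to a strictly triangular matrix -/
def bl (u : Pr n → ZMod p) (x y : G) : ZMod p := ∑ q : Pr n, u q * (k q.fst x * k q.1 y)

/-- the bilinear cocycle attached to a strictly triangular matrix -/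
def Lam (hk : ∀ i x y, k i (x * y) = k i x + k i y) :
    Multiplicative (Pr n → ZMod p) →* Zc G :=
  MonoidHom.mk' (fun u => ⟨fun x y => ψ (Multiplicative.ofAdd (bl k u.toAdd x y)), by
    intro x y z
    beta_reduce
    rw [← map_mul ψ, ← map_mul ψ, ← ofAdd_add, ← ofAdd_add]
    congr 2
    unfold bl
    rw [← Finset.sum_add_distrib, ← Finset.sum_add_distrib]
    refine Finset.sum_congr rfl fun q _ => ?_
    rw [hk, hk]; ring⟩) (by
    intro u v
    apply Subtype.ext
    funext x y
    change ψ _ = ψ _ * ψ _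
    rw [← map_mul ψ, ← ofAdd_add]
    congr 2
    unfold bl
    rw [← Finset.sum_add_distrib]
    refine Finset.sum_congr rfl fun q _ => ?_
    rw [toAdd_mul, Pi.add_apply]; ring)

theorem Lam_apply (hk : ∀ i x y, k i (x * y) = k i x + k i y) (u : Multiplicative (Pr n → ZMod p))
    (x y : G) : (Lam ψ k hk u).1 x y = ψ (Multiplicative.ofAdd (bl k u.toAdd x y)) := rfl

theorem bl_e (e : Fin n → G) (hke : ∀ i j, k i (e j) = if i = j then 1 else 0)
    (u : Pr n → ZMod p) (q : Pr n) : bl k u (e q.fst) (e q.1) = u q := by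
  unfold bl
  rw [Finset.sum_eq_single q]
  · simp [hke]
  · rintro ⟨j, i⟩ - hne
    rw [hke, hke]
    by_cases h1 : j = q.1
    · subst h1
      rw [if_neg, zero_mul, mul_zero]
      intro h2
      apply hne
      have h3 : i = q.2 := by
        have := congrArg Fin.val h2
        exact Fin.ext this
      rw [h3]
    · simp only [h1, if_false, mul_zero]
  · simp

theorem bl_e' (e : Fin n → G) (hke : ∀ i j, k i (e j) = if i = j then 1 else 0)
    (u : Pr n → ZMod p) (q : Pr n) : bl k u (e q.1) (e q.fst) = 0 := by
  unfold bl
  apply Finset.sum_eq_zero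
  intro r _
  rw [hke, hke]
  by_cases h1 : r.fst = q.1
  · by_cases h2 : r.1 = q.fst
    · exfalso
      have a1 : r.fst < r.1 := r.2.2
      have a2 : q.fst < q.1 := q.2.2
      rw [h1, h2] at a1
      exact lt_asymm a1 a2
    · simp [h2]
  · simp [h1]

theorem lower (hp : p.Prime) [Finite G] (hψ : Function.Injective ψ)
    (hc : ∀ a b : G, ⁅a, b⁆ ∈ Subgroup.center G)
    (hz : Nat.card (Subgroup.center G) = p ^ 2)
    (hk : ∀ i x y, k i (x * y) = k i x + k i y)
    (hkz : ∀ i, ∀ z ∈ Subgroup.center G, k i z = 0)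
    (e : Fin n → G) (hke : ∀ i j, k i (e j) = if i = j then 1 else 0)
    (hB : (Bc G).index ≠ 0) : p ^ (n * (n - 1) / 2) ≤ (Bc G).index * p ^ 2 := by
  have : NeZero p := ⟨hp.ne_zero⟩
  set Λ := Lam ψ k hk with hΛ
  let N := (Bc G).comap Λ
  have hNi : N.index ≤ (Bc G).index := by
    rw [Subgroup.index_comap]
    exact Nat.le_of_dvd (Nat.pos_of_ne_zero hB) (Subgroup.relIndex_dvd_index_of_normal _ _)
  have hH : Nat.card (Subgroup.center G →* ℂˣ) = p ^ 2 := by rw [card_chars, hz]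
  have hHf : Finite (Subgroup.center G →* ℂˣ) := by
    apply Nat.finite_of_card_ne_zero; rw [hH]; exact pow_ne_zero _ hp.ne_zero
  have hl : ∀ u, ∀ z ∈ Subgroup.center G, ∀ x, (Λ u).1 z x = 1 := by
    intro u z hz x
    have : bl k u.toAdd z x = 0 := by
      unfold bl
      apply Finset.sum_eq_zero
      intro q _
      rw [hkz _ z hz]; simp
    rw [hΛ, Lam_apply, this, ofAdd_zero, map_one]
  have hex : ∀ u : N, ∃ c : G → ℂˣ, ∀ x y, (Λ u.1).1 x y = c x * c y / c (x * y) := fun u => u.2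
  choose c hcc using hex
  have hcz : ∀ u, ∀ z ∈ Subgroup.center G, ∀ x, c u (z * x) = c u z * c u x := by
    intro u z hz x
    have := hcc u z x
    rw [hl _ z hz] at this
    exact (div_eq_one.1 this.symm).symm
  let Ξ : N → (Subgroup.center G →* ℂˣ) := fun u =>
    MonoidHom.mk' (fun z => c u z.1) (fun z w => hcz u z.1 z.2 w.1)
  have hbt : ∀ u x y, bt (Λ u.1).1 x y = (c u ⁅x, y⁆)⁻¹ := by
    intro u x y
    have h1 := hcz u ⁅x, y⁆ (hc x y) (y * x)
    have h2 : ⁅x, y⁆ * (y * x) = x * y := by rw [commutatorElement_def]; group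
    rw [h2] at h1
    rw [bt, hcc, hcc, h1]
    generalize c u x = a, c u y = b, c u (y * x) = d, c u ⁅x, y⁆ = f
    ext; push_cast; field_simp
  have hΞ : Function.Injective Ξ := by
    intro u v h
    apply Subtype.ext
    apply Multiplicative.toAdd.injective
    funext q
    have h1 : ∀ x y, bt (Λ u.1).1 x y = bt (Λ v.1).1 x y := by
      intro x y
      rw [hbt, hbt]
      congr 1
      exact DFunLike.congr_fun h ⟨⁅x, y⁆, hc x y⟩
    have h2 := h1 (e q.fst) (e q.1)
    simp only [bt, hΛ, Lam_apply, bl_e k e hke, bl_e' k e hke, ofAdd_zero, map_one, div_one] at h2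
    exact Multiplicative.ofAdd.injective (hψ h2)
  have hN : Nat.card N ≤ p ^ 2 := hH ▸ Nat.card_le_card_of_injective Ξ hΞ
  have hU : Nat.card (Multiplicative (Pr n → ZMod p)) = p ^ (n * (n - 1) / 2) := by
    have : Nat.card (Pr n → ZMod p) = p ^ (n * (n - 1) / 2) := by
      rw [Nat.card_fun, card_pairs, Nat.card_zmod]
    exact this
  rw [← hU, ← Subgroup.card_mul_index N, mul_comm]
  exact Nat.mul_le_mul hNi hN

end lower

theorem exists_psi {p : ℕ} (hp : p.Prime) :
    ∃ ψ : Multiplicative (ZMod p) →* ℂˣ, Function.Injective ψ := by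
  have : Fact p.Prime := ⟨hp⟩
  have : NeZero p := ⟨hp.ne_zero⟩
  have h1 : Multiplicative.ofAdd (1 : ZMod p) ≠ 1 := by
    rw [Ne, ofAdd_eq_one]; exact one_ne_zero
  have : NeZero (Monoid.exponent (Multiplicative (ZMod p))) := ⟨Monoid.exponent_ne_zero_of_finite⟩
  obtain ⟨ψ, hψ⟩ := CommGroup.exists_apply_ne_one_of_hasEnoughRootsOfUnity
    (Multiplicative (ZMod p)) ℂ h1
  refine ⟨ψ, ?_⟩
  rw [← MonoidHom.ker_eq_bot_iff]
  have hpc : (Nat.card (Multiplicative (ZMod p))).Prime := by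
    have : Nat.card (ZMod p) = p := Nat.card_zmod p
    have h2 : Nat.card (Multiplicative (ZMod p)) = p := this
    rw [h2]; exact hp
  have : Fact (Nat.card (Multiplicative (ZMod p))).Prime := ⟨hpc⟩
  rcases Subgroup.eq_bot_or_eq_top_of_prime_card ψ.ker with h | h
  · exact h
  · exfalso
    apply hψ
    rw [← MonoidHom.mem_ker, h]; trivial

theorem pow_mem_coatom {p : ℕ} (hpG : IsPGroup p G) (M : Subgroup G) [M.Normal]
    (hM : IsCoatom M) (x : G) : x ^ p ∈ M := by
  by_contra hx
  have htop : M ⊔ Subgroup.zpowers (x ^ p) = ⊤ := by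
    apply hM.2
    rw [left_lt_sup]
    intro h
    exact hx (h (Subgroup.mem_zpowers _))
  have hxm : x ∈ M ⊔ Subgroup.zpowers (x ^ p) := by rw [htop]; trivial
  rw [Subgroup.mem_sup_of_normal_left] at hxm
  obtain ⟨m, hm, y, hy, hmy⟩ := hxm
  obtain ⟨k, rfl⟩ := hy
  obtain ⟨j, hj⟩ := hpG x
  have h1 : x ^ (1 - (p : ℤ) * k) ∈ M := by
    have : x ^ (1 - (p : ℤ) * k) = m := by
      rw [zpow_sub, zpow_one, zpow_mul, zpow_natCast, mul_inv_eq_iff_eq_mul]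
      exact hmy.symm
    rw [this]; exact hm
  have hcop : IsCoprime (1 - (p : ℤ) * k) ((p : ℤ) ^ j) := by
    apply IsCoprime.pow_right
    exact ⟨1, k, by ring⟩
  obtain ⟨a, b, hab⟩ := hcop
  have h2 : x ∈ M := by
    have : x = (x ^ (1 - (p : ℤ) * k)) ^ a := by
      have h3 : (x ^ ((p : ℤ) ^ j)) = 1 := by
        rw [← Nat.cast_pow, zpow_natCast]; exact hj
      rw [← zpow_mul, mul_comm _ a]
      calc x = x ^ (a * (1 - (p : ℤ) * k) + b * (p : ℤ) ^ j) := by rw [hab, zpow_one]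
        _ = _ := by rw [zpow_add, mul_comm b, zpow_mul x _ b, h3, one_zpow, mul_one]
    rw [this]; exact zpow_mem h1 a
  exact hx (pow_mem h2 p)

theorem pow_mem_frattini {p : ℕ} [Group.IsNilpotent G] (hpG : IsPGroup p G) (x : G) :
    x ^ p ∈ frattini G := by
  simp_rw [frattini, Order.radical, Subgroup.mem_iInf]
  intro M hM
  have : M.Normal := Subgroup.NormalizerCondition.normal_of_coatom M Group.normalizerCondition_of_isNilpotent hM
  exact pow_mem_coatom hpG M hM x

theorem exists_gens [Group.FG G] : ∃ e : Fin (Group.rank G) → G,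
    Subgroup.closure (Set.range e) = ⊤ := by
  obtain ⟨S, hS, hcl⟩ := Group.rank_spec G
  refine ⟨fun i => (S.equivFin.symm (Fin.cast hS.symm i)).1, ?_⟩
  rw [← hcl]
  congr 1
  ext x
  constructor
  · rintro ⟨i, rfl⟩
    exact (S.equivFin.symm (Fin.cast hS.symm i)).2
  · intro hx
    exact ⟨Fin.cast hS (S.equivFin ⟨x, hx⟩), by simp⟩

theorem coords_aux {p : ℕ} (hp : p.Prime) [Finite G] {V : Type} [AddCommGroup V]
    [Module (ZMod p) V] [Finite V] (π : G → V) (hπmul : ∀ x y, π (x * y) = π x + π y)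
    (hπs : Function.Surjective π) (hker : ∀ x, π x = 0 ↔ x ∈ frattini G)
    (hzf : Subgroup.center G = frattini G) :
    ∃ (n : ℕ) (k : Fin n → G → ZMod p) (e : Fin n → G), Group.rank G ≤ n ∧
      (∀ i x y, k i (x * y) = k i x + k i y) ∧ (∀ i, ∀ z ∈ Subgroup.center G, k i z = 0) ∧
      ∀ i j, k i (e j) = if i = j then 1 else 0 := by
  have : Fact p.Prime := ⟨hp⟩
  have hπ1 : π 1 = 0 := by
    have := hπmul 1 1
    rwa [mul_one, left_eq_add] at this
  have hπinv : ∀ x, π x⁻¹ = - π x := fun x => by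
    have := hπmul x⁻¹ x
    rw [inv_mul_cancel, hπ1] at this
    exact eq_neg_of_add_eq_zero_left this.symm
  have hπpow : ∀ x (m : ℕ), π (x ^ m) = m • π x := fun x m => by
    induction m with
    | zero => rw [pow_zero, zero_smul, hπ1]
    | succ m ih => rw [pow_succ, hπmul, ih, succ_nsmul]
  let b := Module.finBasis (ZMod p) V
  choose s hs using hπs
  let e := fun i => s (b i)
  refine ⟨Module.finrank (ZMod p) V, fun i x => b.repr (π x) i, e, ?_, ?_, ?_, ?_⟩
  · classical
    have hcl : Subgroup.closure (Set.range e) = ⊤ := by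
      apply frattini_nongenerating
      rw [eq_top_iff]
      intro x _
      -- the image of the closure is everything
      have hspan : ∀ v : V, ∃ y ∈ Subgroup.closure (Set.range e), π y = v := by
        intro v
        have hv : v ∈ Submodule.span (ZMod p) (Set.range b) := by rw [b.span_eq]; trivial
        induction hv using Submodule.span_induction with
        | mem v hv =>
          obtain ⟨i, rfl⟩ := hv
          exact ⟨e i, Subgroup.subset_closure ⟨i, rfl⟩, hs _⟩
        | zero => exact ⟨1, one_mem _, hπ1⟩
        | add v w _ _ hv hw =>
          obtain ⟨y, hy, rfl⟩ := hv
          obtain ⟨y', hy', rfl⟩ := hw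
          exact ⟨y * y', mul_mem hy hy', hπmul _ _⟩
        | smul a v _ hv =>
          obtain ⟨y, hy, rfl⟩ := hv
          refine ⟨y ^ a.val, pow_mem hy _, ?_⟩
          have h1 : a • π y = a.val • π y := by
            conv_lhs => rw [← ZMod.natCast_zmod_val a]
            rw [Nat.cast_smul_eq_nsmul]
          rw [h1]
          exact hπpow _ _
      obtain ⟨y, hy, hyx⟩ := hspan (π x)
      have h1 : y⁻¹ * x ∈ frattini G := by
        rw [← hker, hπmul, hπinv, hyx, neg_add_cancel]
      have := Subgroup.mul_mem_sup hy h1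
      rwa [mul_inv_cancel_left] at this
    have := Group.rank_le (S := Finset.univ.image e) (by
      rw [Finset.coe_image, Finset.coe_univ, Set.image_univ]; exact hcl)
    refine this.trans (Finset.card_image_le.trans ?_)
    simp
  · intro i x y
    beta_reduce
    rw [hπmul, map_add, Finsupp.add_apply]
  · intro i z hz
    have h0 : π z = 0 := by rw [hker, ← hzf]; exact hz
    beta_reduce
    rw [h0, map_zero, Finsupp.zero_apply]
  · intro i j
    simp only [e, hs, Module.Basis.repr_self, Finsupp.single_apply, eq_comm]

theorem exists_coords {p : ℕ} (hp : p.Prime) [Finite G]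
    (hzc : Subgroup.center G = commutator G) (hzf : Subgroup.center G = frattini G)
    (hpw : ∀ x : G, x ^ p ∈ commutator G) :
    ∃ (n : ℕ) (k : Fin n → G → ZMod p) (e : Fin n → G), Group.rank G ≤ n ∧
      (∀ i x y, k i (x * y) = k i x + k i y) ∧ (∀ i, ∀ z ∈ Subgroup.center G, k i z = 0) ∧
      ∀ i j, k i (e j) = if i = j then 1 else 0 := by
  have : Fact p.Prime := ⟨hp⟩
  let V := Additive (Abelianization G)
  have hV : ∀ v : V, p • v = 0 := by
    intro v
    obtain ⟨x, hx⟩ := QuotientGroup.mk_surjective (s := commutator G) v.toMul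
    have h1 : (v.toMul) ^ p = 1 := by
      rw [← hx]
      exact (QuotientGroup.eq_one_iff (x ^ p)).2 (hpw x)
    exact h1
  let : Module (ZMod p) V := AddCommGroup.zmodModule hV
  have : Finite V := inferInstanceAs (Finite (G ⧸ commutator G))
  refine coords_aux hp (V := V) (fun x => Additive.ofMul (Abelianization.of x)) ?_ ?_ ?_ hzf
  · intro x y
    rw [map_mul, ofMul_mul]
  · intro v
    obtain ⟨x, hx⟩ := QuotientGroup.mk_surjective (s := commutator G) v.toMul
    exact ⟨x, hx⟩
  · intro x
    rw [← hzf, hzc]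
    exact QuotientGroup.eq_one_iff x

theorem nat_bounds {p : ℕ} (hp : p.Prime) [Finite G] [Group.IsNilpotent G] (hpG : IsPGroup p G)
    (hzc : Subgroup.center G = commutator G) (hzf : Subgroup.center G = frattini G)
    (hz : Nat.card (Subgroup.center G) = p ^ 2) :
    p ^ (Group.rank G * (Group.rank G - 1) / 2) ≤ (Bc G).index * p ^ 2 ∧
    (Bc G).index * p ^ 2 ≤ p ^ (Group.rank G * (Group.rank G - 1) / 2) * p ^ 5 := by
  have hc : ∀ a b : G, ⁅a, b⁆ ∈ Subgroup.center G := fun a b => by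
    rw [hzc]; exact Subgroup.commutator_mem_commutator trivial trivial
  have hpw : ∀ x : G, x ^ p ∈ commutator G := fun x => by
    rw [← hzc, hzf]; exact pow_mem_frattini hpG x
  obtain ⟨e, he⟩ := exists_gens (G := G)
  obtain ⟨hB, hup⟩ := upper hp hc hzc hz hpw e he
  refine ⟨?_, hup⟩
  obtain ⟨n, k, e', hn, hk, hkz, hke⟩ := exists_coords hp hzc hzf hpw
  obtain ⟨ψ, hψ⟩ := exists_psi hp
  refine le_trans ?_ (lower ψ k hp hψ hc hz hk hkz e' hke hB)
  apply Nat.pow_le_pow_right hp.pos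
  apply Nat.div_le_div_right
  exact Nat.mul_le_mul hn (Nat.sub_le_sub_right hn 1)

end SchurAux

/-- Corollary 2 for special `p`-groups with center of order `p ^ 2`:
`p ^ (d * (d - 1) / 2 - 2) ≤ |M(G₁)| ≤ p ^ (d * (d - 1) / 2 + 3)`.
A special `p`-group is a finite `p`-group of nilpotency class 2 whose center
coincides with its derived subgroup and with its Frattini subgroup. -/
theorem schur_multiplier_bounds_special_center_p_sq (p d : ℕ) (hp : p.Prime)
    (G : Type) [Group G] [Finite G] [Group.IsNilpotent G]
    (hpG : IsPGroup p G)
    (hc : Group.nilpotencyClass G = 2)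
    (hzc : Subgroup.center G = commutator G)
    (hzf : Subgroup.center G = frattini G)
    (hz : Nat.card (Subgroup.center G) = p ^ 2)
    (hd : Group.rank G = d) :
    (p : ℝ) ^ ((d : ℝ) * ((d : ℝ) - 1) / 2 - 2) ≤ (Nat.card (schurMultiplier G) : ℝ) ∧
    (Nat.card (schurMultiplier G) : ℝ) ≤ (p : ℝ) ^ ((d : ℝ) * ((d : ℝ) - 1) / 2 + 3) := by
  have hcard : Nat.card (schurMultiplier G) = (SchurAux.Bc G).index := SchurAux.card_schur G
  obtain ⟨h1, h2⟩ := SchurAux.nat_bounds hp hpG hzc hzf hz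
  rw [hd] at h1 h2
  rw [hcard]
  generalize (SchurAux.Bc G).index = M at h1 h2
  have hpos : (0 : ℝ) < p := by exact_mod_cast hp.pos
  have hC : (d : ℝ) * ((d : ℝ) - 1) / 2 = ((d * (d - 1) / 2 : ℕ) : ℝ) := by
    rw [Nat.cast_div (Nat.even_mul_pred_self d).two_dvd (by norm_num)]
    rcases d with _ | d
    · simp
    · push_cast; simp
  rw [hC]
  generalize d * (d - 1) / 2 = C at h1 h2
  have h1' : (p : ℝ) ^ C ≤ M * (p : ℝ) ^ 2 := by exact_mod_cast h1
  have h2' : (M : ℝ) * (p : ℝ) ^ 2 ≤ (p : ℝ) ^ C * (p : ℝ) ^ 5 := by exact_mod_cast h2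
  have hp2 : (0 : ℝ) < (p : ℝ) ^ 2 := by positivity
  constructor
  · rw [Real.rpow_sub hpos, Real.rpow_natCast, Real.rpow_ofNat, div_le_iff₀ hp2]
    exact h1'
  · rw [Real.rpow_add hpos, Real.rpow_natCast, Real.rpow_ofNat]
    have : (M : ℝ) * (p : ℝ) ^ 2 ≤ (p : ℝ) ^ C * (p : ℝ) ^ 3 * (p : ℝ) ^ 2 := by
      calc _ ≤ _ := h2'
        _ = _ := by ring
    exact le_of_mul_le_mul_right this hp2
end

section
/- Let p be a prime and G₂ a special p-group with center of order p³ and d(G₂) = d. Then p^{(1/2)d(d-1) − 3} ≤ |M(G₂)| ≤ p^{(1/2)d(d-1) + 6}. -/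
namespace SchurAux
open Subgroup

/-- Greedy choice of generators modulo a subgroup in a finite `p`-group. -/
lemma exists_gens_s13 {p : ℕ} (hp : p.Prime) {Z : Type} [CommGroup Z] [Finite Z] (hZ : IsPGroup p Z)
    (A : Subgroup Z) (S : Set Z) :
    ∃ t : Finset Z, (t : Set Z) ⊆ S ∧ closure S ≤ A ⊔ closure (t : Set Z) ∧
      Nat.card A * p ^ t.card ≤ Nat.card (A ⊔ closure (t : Set Z) : Subgroup Z) := by
  classical
  have : Fintype Z := Fintype.ofFinite Z
  let P : Finset (Finset Z) := Finset.univ.filter fun t => (t : Set Z) ⊆ S ∧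
      Nat.card A * p ^ t.card ≤ Nat.card (A ⊔ closure (t : Set Z) : Subgroup Z)
  have hne : P.Nonempty := ⟨∅, by simp [P]⟩
  obtain ⟨t, htP, hmax⟩ := P.exists_max_image Finset.card hne
  simp only [P, Finset.mem_filter, Finset.mem_univ, true_and] at htP hmax
  refine ⟨t, htP.1, ?_, htP.2⟩
  rw [closure_le]
  intro s hs
  by_contra hsn
  have hst : s ∉ t := fun h => hsn (mem_sup_right (subset_closure h))
  have h1 := hmax (insert s t) ⟨by
    rw [Finset.coe_insert]; exact Set.insert_subset hs htP.1, ?_⟩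
  · rw [Finset.card_insert_of_notMem hst] at h1; omega
  · rw [Finset.card_insert_of_notMem hst, pow_succ, ← mul_assoc]
    set B := A ⊔ closure (t : Set Z) with hB
    set C := A ⊔ closure ((insert s t : Finset Z) : Set Z) with hC
    have hBC : B ≤ C := sup_le_sup_left (Subgroup.closure_mono (by simp)) A
    have hne : B ≠ C := fun h => hsn (by
      show s ∈ B
      rw [h]; exact mem_sup_right (subset_closure (by simp)))
    have h2 : Nat.card B * B.relIndex C = Nat.card C := by
      rw [← (B.subgroupOf C).card_mul_index, Nat.card_congr (subgroupOfEquivOfLe hBC).toEquiv]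
      rfl
    have h3 : B.relIndex C ≠ 1 := fun h => hne (le_antisymm hBC (relIndex_eq_one.mp h))
    obtain ⟨k, hk⟩ : ∃ k, B.relIndex C = p ^ k := by
      have := Fact.mk hp
      exact (hZ.to_subgroup C).index (B.subgroupOf C)
    have h4 : p ≤ B.relIndex C := by
      rw [hk]
      rcases k with _ | k
      · simp [hk] at h3
      · exact Nat.le_self_pow (by omega) p
    calc _ ≤ Nat.card B * p := Nat.mul_le_mul_right _ htP.2
      _ ≤ Nat.card B * B.relIndex C := Nat.mul_le_mul_left _ h4
      _ = _ := h2

/-- Size of an abelian group generated by elements of order dividing `p`. -/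
lemma card_closure_le {p : ℕ} (hp : p.Prime) {B : Type} [CommGroup B] (S : Finset B)
    (hS : ∀ s ∈ S, s ^ p = 1) :
    Finite (closure (S : Set B)) ∧ Nat.card (closure (S : Set B)) ≤ p ^ S.card := by
  classical
  induction S using Finset.induction_on with
  | empty =>
    rw [Finset.coe_empty, Subgroup.closure_empty]
    exact ⟨inferInstance, by simp⟩
  | insert a S ha ih =>
    obtain ⟨hf, hc⟩ := ih fun s hs => hS s (Finset.mem_insert_of_mem hs)
    have hfo : IsOfFinOrder a := isOfFinOrder_iff_pow_eq_one.mpr ⟨p, hp.pos, hS a (by simp)⟩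
    have hz : Finite (zpowers a) := by
      exact (finite_zpowers.mpr hfo)
    let f : zpowers a × closure (S : Set B) → closure ((insert a S : Finset B) : Set B) :=
      fun x => ⟨x.1 * x.2, by
        have h1 : zpowers a ≤ closure ((insert a S : Finset B) : Set B) := by
          rw [zpowers_le]; exact subset_closure (by simp)
        have h2 : closure (S : Set B) ≤ closure ((insert a S : Finset B) : Set B) :=
          Subgroup.closure_mono (by simp)
        exact mul_mem (h1 x.1.2) (h2 x.2.2)⟩
    have hs : Function.Surjective f := by
      rintro ⟨y, hy⟩
      rw [Finset.coe_insert, Set.insert_eq, Subgroup.closure_union, ← zpowers_eq_closure, mem_sup] at hy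
      obtain ⟨u, hu, v, hv, rfl⟩ := hy
      exact ⟨(⟨u, hu⟩, ⟨v, hv⟩), rfl⟩
    refine ⟨Finite.of_surjective f hs, ?_⟩
    refine (Nat.card_le_card_of_surjective f hs).trans ?_
    rw [Nat.card_prod, Finset.card_insert_of_notMem ha, pow_succ, mul_comm]
    refine Nat.mul_le_mul hc ?_
    rw [Nat.card_zpowers]
    exact orderOf_le_of_pow_eq_one hp.pos (hS a (by simp))

/-- The positions detecting Jacobi pairings. -/
lemma exists_positions_aux {p : ℕ} (hp : p.Prime) {Z G : Type} [CommGroup Z] [Finite Z]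
    [Group G] (hZ : IsPGroup p Z) (c : G →* G →* Z)
    (hanti : ∀ x y, c x y = (c y x)⁻¹) (hgen : closure {z | ∃ x y, c x y = z} = ⊤) (s : ℕ) :
    ∀ A : Subgroup Z, A.index = p ^ s → ∃ L : Finset (Z × G), 2 * L.card ≤ s * (s + 3) ∧
      ∀ (M : Type) [CommGroup M] (β : Z →* G →* M),
        (∀ x y z, β (c x y) z * β (c y z) x * β (c z x) y = 1) →
        (∀ a ∈ A, β a = 1) → (∀ q ∈ L, β q.1 q.2 = 1) → β = 1 := by
  classical
  induction s using Nat.strong_induction_on with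
  | _ s ih =>
  intro A hA
  rcases Nat.eq_zero_or_pos s with rfl | hs
  · refine ⟨∅, by simp, fun M _ β _ h _ => ?_⟩
    have : A = ⊤ := by simpa using hA
    ext1 z
    exact h z (this ▸ mem_top z)
  have hAt : A ≠ ⊤ := fun h => by
    rw [h, index_top] at hA
    exact absurd hA.symm (Nat.one_lt_pow hs.ne' hp.one_lt).ne'
  obtain ⟨x, y, hxy⟩ : ∃ x y, c x y ∉ A := by
    by_contra! h
    refine hAt (top_le_iff.mp ?_)
    rw [← hgen, closure_le]
    rintro z ⟨x, y, rfl⟩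
    exact h x y
  obtain ⟨t1, -, ht1, hc1⟩ := exists_gens_s13 hp hZ A Set.univ
  obtain ⟨t2, ht2s, ht2, hc2⟩ := exists_gens_s13 hp hZ A (Set.range (c x))
  obtain ⟨u, hu, hut⟩ : ∃ u : Finset G, u.image (c x) = t2 ∧ u.card = t2.card := by
    obtain ⟨u, -, h1, h2⟩ := Finset.exists_subset_injOn_image_eq_of_surjOn (Set.univ) t2
      (f := c x) (by
        intro z hz
        obtain ⟨g, hg⟩ := ht2s hz
        exact ⟨g, trivial, hg⟩)
    exact ⟨u, h2, by rw [← h2, Finset.card_image_of_injOn h1]⟩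
  set A' := A ⊔ closure (t2 : Set Z) with hA'
  have hlt : A < A' := by
    refine lt_of_le_of_ne le_sup_left fun h => hxy ?_
    rw [h]
    exact ht2 (subset_closure ⟨y, rfl⟩)
  have := Fact.mk hp
  obtain ⟨s', hs'⟩ := hZ.index A'
  have hcA : 0 < Nat.card A := Nat.card_pos
  have hcA' : 0 < Nat.card A' := Nat.card_pos
  have e1 : Nat.card A * p ^ s = Nat.card Z := by rw [← hA]; exact A.card_mul_index
  have e2 : Nat.card A' * p ^ s' = Nat.card Z := by rw [← hs']; exact A'.card_mul_index
  have hcardlt : Nat.card A < Nat.card A' := by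
    refine lt_of_le_of_ne (card_le_of_le hlt.le) fun h => hlt.ne (eq_of_le_of_card_ge hlt.le h.ge)
  have hss : s' < s := by
    by_contra! h
    have := Nat.pow_le_pow_right hp.pos h
    nlinarith [pow_pos hp.pos s]
  have h1 : t1.card ≤ s := by
    have h3 : Nat.card A * p ^ t1.card ≤ Nat.card A * p ^ s := by
      rw [e1]; exact hc1.trans (card_le_card_group _)
    exact (Nat.pow_le_pow_iff_right hp.one_lt).mp (Nat.le_of_mul_le_mul_left h3 hcA)
  have h2 : t2.card + s' ≤ s := by
    have h3 : Nat.card A * p ^ (t2.card + s') ≤ Nat.card A * p ^ s := by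
      rw [e1, ← e2, pow_add, ← mul_assoc]
      exact Nat.mul_le_mul_right _ hc2
    exact (Nat.pow_le_pow_iff_right hp.one_lt).mp (Nat.le_of_mul_le_mul_left h3 hcA)
  obtain ⟨L', hL', hdet⟩ := ih s' hss A' hs'
  refine ⟨t1.image (fun z => (z, x)) ∪ u.sym2.image (fun q => (c x q.out.1, q.out.2)) ∪ L',
    ?_, ?_⟩
  · have b1 : (t1.image (fun z => (z, x))).card ≤ s := Finset.card_image_le.trans h1
    have b2 : (u.sym2.image (fun q => (c x q.out.1, q.out.2))).card ≤ (t2.card + 1).choose 2 := by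
      refine Finset.card_image_le.trans ?_
      rw [Finset.card_sym2, hut]
    have b3 : 2 * (t2.card + 1).choose 2 = (t2.card + 1) * t2.card := by
      rw [Nat.choose_two_right, Nat.add_sub_cancel, mul_comm 2,
        Nat.div_mul_cancel (by rw [mul_comm]; exact (Nat.even_mul_succ_self _).two_dvd)]
    have b4 := Finset.card_union_le (t1.image (fun z => (z, x)) ∪
      u.sym2.image (fun q => (c x q.out.1, q.out.2))) L'
    have b5 := Finset.card_union_le (t1.image (fun z => (z, x)))
      (u.sym2.image (fun q => (c x q.out.1, q.out.2)))
    obtain ⟨r, rfl⟩ := Nat.exists_eq_add_of_lt hss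
    have b6 : (t2.card + 1) * t2.card ≤ (r + 1 + 1) * (r + 1) :=
      Nat.mul_le_mul (by omega) (by omega)
    nlinarith [Nat.zero_le (s' * r)]
  · intro M _ β hJ hβA hβL
    have k1 : ∀ z, β z x = 1 := by
      have : A ⊔ closure (t1 : Set Z) ≤ (β.flip x).ker := by
        refine sup_le (fun a ha => ?_) ((closure_le _).mpr fun z hz => ?_)
        · rw [MonoidHom.mem_ker, MonoidHom.flip_apply, hβA a ha]; rfl
        · exact hβL (z, x) (by
            refine Finset.mem_union_left _ (Finset.mem_union_left _ ?_)
            exact Finset.mem_image_of_mem _ hz)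
      intro z
      exact this (ht1 (by rw [Subgroup.closure_univ]; trivial))
    have k2 : ∀ g h, β (c x g) h = β (c x h) g := by
      intro g h
      have := hJ x g h
      rw [k1, mul_one, hanti h x, map_inv, MonoidHom.inv_apply] at this
      exact mul_inv_eq_one.mp this
    have k3 : ∀ g ∈ u, ∀ h ∈ u, β (c x g) h = 1 := by
      intro g hg h hh
      have hm : s(g, h) ∈ u.sym2 := by simp [hg, hh]
      have h5 := hβL _ (Finset.mem_union_left _ (Finset.mem_union_right _
        (Finset.mem_image_of_mem (fun q : Sym2 G => (c x q.out.1, q.out.2)) hm)))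
      have h6 : s((s(g,h)).out.1, (s(g,h)).out.2) = s(g,h) := Quot.out_eq (s(g,h))
      rcases Sym2.eq_iff.mp h6 with ⟨h7, h8⟩ | ⟨h7, h8⟩
      · simpa only [h7, h8] using h5
      · rw [k2]; simpa only [h7, h8] using h5
    have k4 : ∀ g ∈ u, ∀ h, β (c x h) g = 1 := by
      intro g hg h
      have : A' ≤ (β.flip g).ker := by
        refine sup_le (fun a ha => ?_) ((closure_le _).mpr fun z hz => ?_)
        · rw [MonoidHom.mem_ker, MonoidHom.flip_apply, hβA a ha]; rfl
        · rw [Finset.mem_coe, ← hu, Finset.mem_image] at hz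
          obtain ⟨g', hg', rfl⟩ := hz
          exact k3 g' hg' g hg
      exact this (ht2 (subset_closure ⟨h, rfl⟩))
    refine hdet M β hJ ?_ fun q hq => hβL q (Finset.mem_union_right _ hq)
    have : A' ≤ β.ker := by
      refine sup_le (fun a ha => hβA a ha) ((closure_le _).mpr fun z hz => ?_)
      rw [Finset.mem_coe, ← hu, Finset.mem_image] at hz
      obtain ⟨g', hg', rfl⟩ := hz
      ext h
      rw [k2]
      exact k4 g' hg' h
    exact fun a ha => this ha

lemma exists_positions {p : ℕ} (hp : p.Prime) {Z G : Type} [CommGroup Z]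
    [Group G] (hZ : Nat.card Z = p ^ 3) (c : G →* G →* Z)
    (hanti : ∀ x y, c x y = (c y x)⁻¹) (hgen : closure {z | ∃ x y, c x y = z} = ⊤) :
    ∃ L : Finset (Z × G), L.card ≤ 9 ∧
      ∀ (M : Type) [CommGroup M] (β : Z →* G →* M) (N : Subgroup M),
        (∀ x y z, β (c x y) z * β (c y z) x * β (c z x) y = 1) →
        (∀ q ∈ L, β q.1 q.2 ∈ N) → ∀ z g, β z g ∈ N := by
  have : Finite Z := Nat.finite_of_card_ne_zero (by rw [hZ]; exact (pow_pos hp.pos 3).ne')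
  have := Fact.mk hp
  obtain ⟨L, hL, h⟩ := exists_positions_aux hp (IsPGroup.of_card hZ) c hanti hgen 3 ⊥
    (by rw [index_bot, hZ])
  refine ⟨L, by omega, fun M _ β N hJ hN z g => ?_⟩
  have := h (M ⧸ N) ((MonoidHom.compHom (QuotientGroup.mk' N)).comp β) (fun x y z => by
    have := congrArg (QuotientGroup.mk' N) (hJ x y z)
    simpa using this) (fun a ha => by
      rw [mem_bot.mp ha, map_one]) (fun q hq => by
      simpa using hN q hq)
  have := DFunLike.congr_fun (DFunLike.congr_fun this z) g
  simpa using this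
end SchurAux


namespace SchurAux
open Subgroup
open scoped commutatorElement

/-- The center of a group is a commutative group. -/
instance centerCommGroup (Q : Type) [Group Q] : CommGroup (center Q) :=
  { (inferInstance : Group (center Q)) with
    mul_comm := fun a b => Subtype.ext (b.2.comm a).symm }

lemma card_pairs_s13 (d : ℕ) :
    ((Finset.univ : Finset (Fin d × Fin d)).filter fun q => q.1 < q.2).card = d.choose 2 := by
  rw [Finset.card_filter, ← Finset.univ_product_univ, Finset.sum_product]
  simp_rw [← Finset.card_filter]
  have : ∀ i : Fin d, ((Finset.univ : Finset (Fin d)).filter fun j => i < j).card = d - 1 - i := by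
    intro i
    rw [← Fin.card_Ioi]
    congr 1
    ext j; simp
  simp_rw [this]
  rw [Fin.sum_univ_eq_sum_range (fun i => d - 1 - i) d, Finset.sum_range_reflect (fun i => i) d,
    Finset.sum_range_id, Nat.choose_two_right]

/-- The commutator pairing of a group of class two. -/
def commHom {Q : Type} [Group Q] (h : commutator Q ≤ center Q) : Q →* Q →* center Q :=
  MonoidHom.mk' (fun x => MonoidHom.mk' (fun y =>
    (⟨⁅x, y⁆, h (commutator_mem_commutator (mem_top x) (mem_top y))⟩ : center Q)) (by
      intro a b
      ext
      have h1 := mem_center_iff.mp (h (commutator_mem_commutator (mem_top x) (mem_top b))) a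
      show ⁅x, a * b⁆ = ⁅x, a⁆ * ⁅x, b⁆
      calc ⁅x, a * b⁆ = ⁅x, a⁆ * (a * ⁅x, b⁆ * a⁻¹) := by simp only [commutatorElement_def]; group
        _ = _ := by rw [h1, mul_inv_cancel_right])) (by
    intro a b
    ext y
    have h1 := mem_center_iff.mp (h (commutator_mem_commutator (mem_top b) (mem_top y))) a
    have h2 := mem_center_iff.mp (h (commutator_mem_commutator (mem_top b) (mem_top y))) ⁅a, y⁆
    show ⁅a * b, y⁆ = ⁅a, y⁆ * ⁅b, y⁆
    calc ⁅a * b, y⁆ = (a * ⁅b, y⁆ * a⁻¹) * ⁅a, y⁆ := by simp only [commutatorElement_def]; group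
        _ = _ := by rw [h1, mul_inv_cancel_right, h2])

lemma commHom_apply {Q : Type} [Group Q] (h : commutator Q ≤ center Q) (x y : Q) :
    (commHom h x y : Q) = ⁅x, y⁆ := rfl

lemma commHom_anti {Q : Type} [Group Q] (h : commutator Q ≤ center Q) (x y : Q) :
    commHom h x y = (commHom h y x)⁻¹ := by
  ext
  simp [commHom_apply]

lemma commHom_center_left {Q : Type} [Group Q] (h : commutator Q ≤ center Q) {x : Q}
    (hx : x ∈ center Q) (y : Q) : commHom h x y = 1 := by
  ext
  rw [commHom_apply, OneMemClass.coe_one, commutatorElement_eq_one_iff_mul_comm]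
  exact (mem_center_iff.mp hx y).symm

lemma commHom_center_right {Q : Type} [Group Q] (h : commutator Q ≤ center Q) {x : Q}
    (hx : x ∈ center Q) (y : Q) : commHom h y x = 1 := by
  rw [commHom_anti, commHom_center_left h hx, inv_one]

lemma commHom_gen {Q : Type} [Group Q] (h : commutator Q ≤ center Q)
    (h' : center Q ≤ commutator Q) : closure {z | ∃ x y, commHom h x y = z} = ⊤ := by
  refine top_le_iff.mp fun z _ => ?_
  have h1 : commutator Q ≤ (closure {z | ∃ x y, commHom h x y = z}).map (center Q).subtype := by
    rw [_root_.commutator_def, commutator_le]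
    intro a _ b _
    exact ⟨commHom h a b, subset_closure ⟨a, b, rfl⟩, rfl⟩
  obtain ⟨w, hw, hwz⟩ := h1 (h' z.2)
  have : w = z := Subtype.ext hwz
  exact this ▸ hw

lemma card_commutator_class2 {p d : ℕ} (hp : p.Prime) {Q : Type} [Group Q]
    (h : commutator Q ≤ center Q) (e : Fin d → Q)
    (hgen : closure (Set.range e) ⊔ center Q = ⊤) (hpow : ∀ x : Q, x ^ p ∈ center Q) :
    Finite (commutator Q) ∧ Nat.card (commutator Q) ≤ p ^ (d.choose 2) := by
  classical
  let S : Finset (center Q) := ((Finset.univ : Finset (Fin d × Fin d)).filter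
    fun q => q.1 < q.2).image fun q => commHom h (e q.1) (e q.2)
  have hS : ∀ i j, commHom h (e i) (e j) ∈ closure (S : Set (center Q)) := by
    have hlt : ∀ i j, i < j → commHom h (e i) (e j) ∈ closure (S : Set (center Q)) := by
      intro i j hij
      refine subset_closure ?_
      exact Finset.mem_coe.mpr (Finset.mem_image.mpr ⟨(i, j), by simp [hij], rfl⟩)
    intro i j
    rcases lt_trichotomy i j with hij | rfl | hij
    · exact hlt i j hij
    · have : commHom h (e i) (e i) = 1 := by ext; simp [commHom_apply]
      rw [this]; exact one_mem _
    · rw [commHom_anti]; exact inv_mem (hlt j i hij)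
  have h1 : ∀ j x, commHom h x (e j) ∈ closure (S : Set (center Q)) := by
    intro j
    have : (⊤ : Subgroup Q) ≤ (closure (S : Set (center Q))).comap ((commHom h).flip (e j)) := by
      rw [← hgen]
      refine sup_le ((closure_le _).mpr ?_) fun z hz => ?_
      · rintro _ ⟨i, rfl⟩; exact hS i j
      · rw [mem_comap, MonoidHom.flip_apply, commHom_center_left h hz]; exact one_mem _
    exact fun x => this (mem_top x)
  have h2 : ∀ x y, commHom h x y ∈ closure (S : Set (center Q)) := by
    intro x
    have : (⊤ : Subgroup Q) ≤ (closure (S : Set (center Q))).comap (commHom h x) := by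
      rw [← hgen]
      refine sup_le ((closure_le _).mpr ?_) fun z hz => ?_
      · rintro _ ⟨i, rfl⟩; exact h1 i x
      · rw [mem_comap, commHom_center_right h hz]; exact one_mem _
    exact fun x => this (mem_top x)
  have h3 : commutator Q ≤ (closure (S : Set (center Q))).map (center Q).subtype := by
    rw [_root_.commutator_def, commutator_le]
    intro a _ b _
    exact ⟨commHom h a b, h2 a b, rfl⟩
  obtain ⟨hf, hc⟩ := card_closure_le hp S (by
    intro s hs
    obtain ⟨q, -, rfl⟩ := Finset.mem_image.mp hs
    rw [← map_pow, commHom_center_right h (hpow _)])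
  have hf' : Finite ((closure (S : Set (center Q))).map (center Q).subtype) := Finite.of_equiv _
    (equivMapOfInjective _ _ (center Q).subtype_injective).toEquiv
  refine ⟨Finite.of_injective _ (inclusion_injective h3), ?_⟩
  refine (Nat.card_le_card_of_injective _ (inclusion_injective h3)).trans ?_
  rw [Nat.card_congr (equivMapOfInjective _ _ (center Q).subtype_injective).toEquiv.symm]
  refine hc.trans (Nat.pow_le_pow_right hp.pos ?_)
  exact Finset.card_image_le.trans (card_pairs_s13 d).le

/-- The Ganea pairing of a central extension. -/
lemma exists_pairing {E G : Type} [Group E] [Group G] (π : E →* G) (hπ : Function.Surjective π)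
    (hk : π.ker ≤ center E) :
    ∃ β : center G →* G →* center E, ∀ (a b : E) (ha : π a ∈ center G),
      (β ⟨π a, ha⟩ (π b) : E) = ⁅a, b⁆ := by
  have hcen : ∀ a b : E, π a ∈ center G → ⁅a, b⁆ ∈ center E := by
    intro a b ha
    apply hk
    rw [MonoidHom.mem_ker, map_commutatorElement, commutatorElement_eq_one_iff_mul_comm]
    exact (mem_center_iff.mp ha _).symm
  have hkc : ∀ k ∈ π.ker, ∀ b : E, b * k = k * b := fun k hk' => mem_center_iff.mp (hk hk')
  have hwd : ∀ a a' b b' : E, π a = π a' → π b = π b' → ⁅a, b⁆ = ⁅a', b'⁆ := by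
    intro a a' b b' h1 h2
    have k1 : a⁻¹ * a' ∈ π.ker := by rw [MonoidHom.mem_ker, map_mul, map_inv, h1, inv_mul_cancel]
    have k2 : b⁻¹ * b' ∈ π.ker := by rw [MonoidHom.mem_ker, map_mul, map_inv, h2, inv_mul_cancel]
    obtain ⟨k, hk1, rfl⟩ : ∃ k ∈ π.ker, a' = a * k := ⟨_, k1, by group⟩
    obtain ⟨l, hl1, rfl⟩ : ∃ l ∈ π.ker, b' = b * l := ⟨_, k2, by group⟩
    have e1 := hkc k hk1
    have e2 := hkc l hl1
    simp only [commutatorElement_def, mul_inv_rev]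
    calc a * b * a⁻¹ * b⁻¹ = a * b * a⁻¹ * b⁻¹ * (k * k⁻¹) * (l * l⁻¹) := by group
      _ = a * b * (a⁻¹ * b⁻¹ * k) * k⁻¹ * l * l⁻¹ := by group
      _ = a * (b * k) * a⁻¹ * (b⁻¹ * k⁻¹ * l) * l⁻¹ := by rw [e1 (a⁻¹ * b⁻¹)]; group
      _ = a * k * b * a⁻¹ * l * b⁻¹ * k⁻¹ * l⁻¹ := by rw [e1 b, e2 (b⁻¹ * k⁻¹)]; group
      _ = a * k * b * (l * a⁻¹) * b⁻¹ * k⁻¹ * l⁻¹ := by rw [← e2 a⁻¹]; group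
      _ = a * k * b * l * (a⁻¹ * b⁻¹ * l⁻¹ * k⁻¹) := by
        have : l⁻¹ * k⁻¹ = k⁻¹ * l⁻¹ := hkc _ (inv_mem hk1) _
        rw [mul_assoc (a⁻¹ * b⁻¹), this]; group
      _ = a * k * (b * l) * (k⁻¹ * a⁻¹) * (l⁻¹ * b⁻¹) := by
        have f1 := hkc _ (inv_mem hk1)
        have f2 := hkc _ (inv_mem hl1)
        rw [f1, ← f2 b⁻¹]; group
  have hmr : ∀ x a b : E, π x ∈ center G → ⁅x, a * b⁆ = ⁅x, a⁆ * ⁅x, b⁆ := by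
    intro x a b hx
    have h1 := mem_center_iff.mp (hcen x b hx) a
    calc ⁅x, a * b⁆ = ⁅x, a⁆ * (a * ⁅x, b⁆ * a⁻¹) := by simp only [commutatorElement_def]; group
        _ = _ := by rw [h1, mul_inv_cancel_right]
  have hml : ∀ a b y : E, π b ∈ center G → ⁅a * b, y⁆ = ⁅a, y⁆ * ⁅b, y⁆ := by
    intro a b y hb
    have h1 := mem_center_iff.mp (hcen b y hb) a
    have h2 := mem_center_iff.mp (hcen b y hb) ⁅a, y⁆
    calc ⁅a * b, y⁆ = (a * ⁅b, y⁆ * a⁻¹) * ⁅a, y⁆ := by simp only [commutatorElement_def]; group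
        _ = _ := by rw [h1, mul_inv_cancel_right, h2]
  let s := Function.surjInv hπ
  have hs : ∀ g, π (s g) = g := Function.surjInv_eq hπ
  refine ⟨MonoidHom.mk' (fun z => MonoidHom.mk' (fun g => (⟨⁅s z, s g⁆, hcen _ _ (by
    rw [hs]; exact z.2)⟩ : center E)) ?_) ?_, ?_⟩
  · intro a b
    ext
    show ⁅s z, s (a * b)⁆ = ⁅s z, s a⁆ * ⁅s z, s b⁆
    rw [← hmr _ _ _ (by rw [hs]; exact z.2)]
    exact hwd _ _ _ _ rfl (by simp [hs])
  · intro a b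
    ext g
    show ⁅s (a * b : center G), s g⁆ = ⁅s a, s g⁆ * ⁅s b, s g⁆
    rw [← hml _ _ _ (by rw [hs]; exact b.2)]
    exact hwd _ _ _ _ (by simp [hs]) rfl
  · intro a b ha
    exact hwd _ _ _ _ (hs _) (hs _)

lemma card_commutator_ext {p d : ℕ} (hp : p.Prime) {E G : Type} [Group E] [Group G]
    (π : E →* G) (hπ : Function.Surjective π) (hk : π.ker ≤ center E)
    (hzc : center G = commutator G) (hz : Nat.card (center G) = p ^ 3)
    (hpow : ∀ g : G, g ^ p ∈ center G) (e : Fin d → G) (he : closure (Set.range e) = ⊤) :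
    Finite (commutator E) ∧ Nat.card (commutator E) ≤ p ^ (d.choose 2 + 9) := by
  classical
  obtain ⟨β, hβ⟩ := exists_pairing π hπ hk
  obtain ⟨L, hL, hdet⟩ := exists_positions hp hz (commHom hzc.ge) (commHom_anti hzc.ge)
    (commHom_gen hzc.ge hzc.le)
  -- surjectivity on commutators
  have hmapc : (commutator E).map π = commutator G := by
    rw [_root_.commutator_def, map_commutator, map_top_of_surjective π hπ, _root_.commutator_def]
  have hβp : ∀ z g, β z g ^ p = 1 := by
    intro z g
    rw [← map_pow]
    have h1 : commutator G ≤ (β z).ker := Abelianization.commutator_subset_ker _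
    exact h1 (hzc ▸ hpow g)
  have hJ : ∀ x y z, β (commHom hzc.ge x y) z * β (commHom hzc.ge y z) x *
      β (commHom hzc.ge z x) y = 1 := by
    have key : ∀ x y z : E, ∀ h, (β ⟨π ⁅x, y⁆, h⟩ (π z) : E) = ⁅⁅x, y⁆, z⁆ :=
      fun x y z h => hβ _ _ h
    have key2 : ∀ x y z : E, (β (commHom hzc.ge (π x) (π y)) (π z) : E) = ⁅⁅x, y⁆, z⁆ := by
      intro x y z
      rw [← key x y z (by rw [map_commutatorElement]; exact (commHom hzc.ge (π x) (π y)).2)]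
      congr 3
      ext
      rw [commHom_apply]; exact (map_commutatorElement _ _ _).symm
    have hcen : ∀ x y z w : E, w * ⁅⁅x, y⁆, z⁆ * w⁻¹ = ⁅⁅x, y⁆, z⁆ := by
      intro x y z w
      rw [← key2, mem_center_iff.mp (β (commHom hzc.ge (π x) (π y)) (π z)).2 w,
        mul_inv_cancel_right]
    intro x y z
    obtain ⟨x, rfl⟩ := hπ x
    obtain ⟨y, rfl⟩ := hπ y
    obtain ⟨z, rfl⟩ := hπ z
    have hw : ⁅⁅x, y⁻¹⁆, z⁻¹⁆ * ⁅⁅z, x⁻¹⁆, y⁻¹⁆ * ⁅⁅y, z⁻¹⁆, x⁻¹⁆ = 1 := by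
      rw [← hcen x y⁻¹ z⁻¹ x⁻¹, ← hcen z x⁻¹ y⁻¹ z⁻¹, ← hcen y z⁻¹ x⁻¹ y⁻¹]
      simp only [commutatorElement_def]
      group
    have hw' : β (commHom hzc.ge (π x) (π y⁻¹)) (π z⁻¹) *
        β (commHom hzc.ge (π z) (π x⁻¹)) (π y⁻¹) *
        β (commHom hzc.ge (π y) (π z⁻¹)) (π x⁻¹) = 1 := by
      ext
      simp only [coe_mul, key2, OneMemClass.coe_one]
      exact hw
    simp only [map_inv, MonoidHom.inv_apply, inv_inv] at hw'
    rw [mul_right_comm]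
    exact hw'
  -- the third term
  let S : Finset (center E) := L.image fun q => β q.1 q.2
  have hall : ∀ z g, β z g ∈ closure (S : Set (center E)) :=
    hdet (center E) β _ hJ fun q hq => subset_closure
      (Finset.mem_coe.mpr (Finset.mem_image_of_mem _ hq))
  obtain ⟨hf, hc⟩ := card_closure_le hp S (by
    intro s hs
    obtain ⟨q, -, rfl⟩ := Finset.mem_image.mp hs
    exact hβp _ _)
  set Γ : Subgroup E := ⁅commutator E, (⊤ : Subgroup E)⁆ with hΓ
  have hΓn : Γ.Normal := inferInstance
  have hΓle : Γ ≤ (closure (S : Set (center E))).map (center E).subtype := by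
    rw [hΓ, commutator_le]
    intro a ha b _
    have ha' : π a ∈ center G := by
      rw [hzc, ← hmapc]; exact mem_map_of_mem _ ha
    exact ⟨β ⟨π a, ha'⟩ (π b), hall _ _, hβ a b ha'⟩
  have hf' : Finite ((closure (S : Set (center E))).map (center E).subtype) := Finite.of_equiv _
    (equivMapOfInjective _ _ (center E).subtype_injective).toEquiv
  have hΓf : Finite Γ := Finite.of_injective _ (inclusion_injective hΓle)
  have hΓc : Nat.card Γ ≤ p ^ 9 := by
    refine (Nat.card_le_card_of_injective _ (inclusion_injective hΓle)).trans ?_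
    rw [Nat.card_congr (equivMapOfInjective _ _ (center E).subtype_injective).toEquiv.symm]
    exact hc.trans (Nat.pow_le_pow_right hp.pos (Finset.card_image_le.trans hL))
  -- the quotient
  have hcenQ : ∀ a : E, π a ∈ center G → QuotientGroup.mk' Γ a ∈ center (E ⧸ Γ) := by
    intro a ha
    rw [mem_center_iff]
    intro q
    obtain ⟨b, rfl⟩ := QuotientGroup.mk'_surjective Γ q
    have ha2 := ha
    rw [hzc, ← hmapc] at ha2
    obtain ⟨a', ha', haa⟩ := ha2
    have h1 : ⁅a, b⁆ ∈ Γ := by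
      have h2 : ⁅a, b⁆ = ⁅a', b⁆ := by
        rw [← hβ a b ha, ← hβ a' b (haa ▸ ha)]
        congr 3
        ext; exact haa.symm
      rw [h2]
      exact commutator_mem_commutator ha' (mem_top b)
    have h3 : ⁅QuotientGroup.mk' Γ a, QuotientGroup.mk' Γ b⁆ = 1 := by
      rw [← map_commutatorElement]
      exact (QuotientGroup.eq_one_iff _).mpr h1
    exact (commutatorElement_eq_one_iff_mul_comm.mp h3).symm
  have hmapQ : (commutator E).map (QuotientGroup.mk' Γ) = commutator (E ⧸ Γ) := by
    rw [_root_.commutator_def, map_commutator,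
      map_top_of_surjective _ (QuotientGroup.mk'_surjective Γ), _root_.commutator_def]
  choose e' he' using fun i => hπ (e i)
  obtain ⟨hQf, hQc⟩ := card_commutator_class2 (p := p) (d := d) hp (Q := E ⧸ Γ) (by
      rw [← hmapQ, map_le_iff_le_comap]
      intro a ha
      exact hcenQ a (by rw [hzc, ← hmapc]; exact mem_map_of_mem _ ha))
    (fun i => QuotientGroup.mk' Γ (e' i)) (by
      refine top_le_iff.mp fun q _ => ?_
      obtain ⟨b, rfl⟩ := QuotientGroup.mk'_surjective Γ q
      have h1 : (closure (Set.range e')).map π = ⊤ := by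
        rw [MonoidHom.map_closure, ← Set.range_comp]
        have : π ∘ e' = e := funext he'
        rw [this, he]
      have h2 : π b ∈ (closure (Set.range e')).map π := h1 ▸ mem_top _
      obtain ⟨k, hk1, hk2⟩ := h2
      have h3 : b = k * (k⁻¹ * b) := by group
      rw [h3, map_mul]
      refine mul_mem (mem_sup_left ?_) (mem_sup_right (hcenQ _ ?_))
      · have h4 := mem_map_of_mem (QuotientGroup.mk' Γ) hk1
        rw [MonoidHom.map_closure, ← Set.range_comp] at h4
        exact h4
      · rw [map_mul, map_inv, hk2, inv_mul_cancel]; exact one_mem _)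
    (by
      intro q
      obtain ⟨b, rfl⟩ := QuotientGroup.mk'_surjective Γ q
      rw [← map_pow]
      exact hcenQ _ (by rw [map_pow]; exact hpow _))
  have hle : Γ ≤ commutator E := by
    rw [hΓ]; exact commutator_mono le_top le_rfl
  have hrel : Γ.relIndex (commutator E) = Nat.card (commutator (E ⧸ Γ)) := by
    rw [← hmapQ, ← relIndex_ker, QuotientGroup.ker_mk']
  have hcard : Nat.card (commutator E) = Nat.card Γ * Nat.card (commutator (E ⧸ Γ)) := by
    rw [← hrel, ← (Γ.subgroupOf (commutator E)).card_mul_index,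
      Nat.card_congr (subgroupOfEquivOfLe hle).toEquiv]
    rfl
  constructor
  · apply Nat.finite_of_card_ne_zero
    rw [hcard]
    exact Nat.mul_ne_zero Nat.card_pos.ne' Nat.card_pos.ne'
  · rw [hcard, pow_add, mul_comm]
    exact Nat.mul_le_mul hQc hΓc
end SchurAux


namespace SchurAux
open Subgroup

lemma pow_p_mem_frattini {p : ℕ} (hp : p.Prime) {G : Type} [Group G] [Finite G]
    [Group.IsNilpotent G] (hpG : IsPGroup p G) (g : G) : g ^ p ∈ frattini G := by
  have := Fact.mk hp
  rw [frattini, Order.radical]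
  simp only [mem_iInf]
  intro M hM
  have hM : IsCoatom M := hM
  have hn : M.Normal := (Group.normalizerCondition_of_isNilpotent).normal_of_coatom _ hM
  obtain ⟨n, hn'⟩ := (hpG.to_subgroup M).exists_card_eq
  obtain ⟨k, hk⟩ := hpG.index M
  have hk0 : k ≠ 0 := by
    rintro rfl
    exact hM.1 (index_eq_one.mp (by simpa using hk))
  have hc := M.card_mul_index
  obtain ⟨K, hK, hMK⟩ := Sylow.exists_subgroup_card_pow_succ (p := p) (n := n) (G := G) (by
    rw [← hc, hn', hk, pow_succ]
    exact Nat.mul_dvd_mul_left _ (dvd_pow_self p hk0)) hn'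
  have hKt : K = ⊤ := by
    refine hM.2 K (lt_of_le_of_ne hMK ?_)
    rintro rfl
    rw [hn'] at hK
    exact absurd (Nat.pow_right_injective hp.two_le hK) (by omega)
  have hidx : M.index = p := by
    rw [hKt, card_top, ← hc, hn', pow_succ] at hK
    exact Nat.eq_of_mul_eq_mul_left (pow_pos hp.pos n) hK
  rw [← hidx]
  exact M.pow_index_mem g

lemma basis_data_aux {p d : ℕ} [Fact p.Prime] {G V : Type} [Group G] [Finite G]
    [AddCommGroup V] [Module (ZMod p) V] [Finite V] (q : G →* Multiplicative V)
    (hq : Function.Surjective q) (hker : q.ker = frattini G) (hd : Group.rank G = d) :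
    ∃ (e : Fin d → G) (x : Fin d → G → ZMod p),
      closure (Set.range e) = ⊤ ∧ (∀ i g h, x i (g * h) = x i g + x i h) ∧
      (∀ i j, x i (e j) = if i = j then 1 else 0) := by
  classical
  have hmf : Module.Finite (ZMod p) V := Module.Finite.of_finite
  have hgens : ∀ K : Subgroup G, K.map q = ⊤ → K = ⊤ := by
    intro K hK
    apply frattini_nongenerating
    refine top_le_iff.mp fun g _ => ?_
    have : q g ∈ K.map q := hK ▸ mem_top _
    obtain ⟨k, hk, hkg⟩ := this
    have h3 : g = k * (k⁻¹ * g) := by group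
    rw [h3]
    refine mul_mem (mem_sup_left hk) (mem_sup_right ?_)
    rw [← hker, MonoidHom.mem_ker, map_mul, map_inv, hkg, inv_mul_cancel]
  -- span versus closure
  have hspan : ∀ S : Set G, Submodule.span (ZMod p) ((fun g => (q g).toAdd) '' S) = ⊤ ↔
      closure S = ⊤ := by
    intro S
    constructor
    · intro h
      apply hgens
      have h1 : Submodule.span (ZMod p) ((fun g => (q g).toAdd) '' S) ≤
          AddSubgroup.toZModSubmodule p
            (Subgroup.toAddSubgroup' ((closure S).map q)) := by
        rw [Submodule.span_le]
        rintro _ ⟨g, hg, rfl⟩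
        exact mem_map_of_mem q (subset_closure hg)
      rw [h] at h1
      refine top_le_iff.mp fun a _ => ?_
      exact h1 (Submodule.mem_top (x := a.toAdd))
    · intro h
      have h1 : closure S ≤ (AddSubgroup.toSubgroup (Submodule.toAddSubgroup
        (Submodule.span (ZMod p) ((fun g => (q g).toAdd) '' S)))).comap q := by
        rw [closure_le]
        intro g hg
        exact Submodule.subset_span (Set.mem_image_of_mem (fun g => (q g).toAdd) hg)
      refine top_le_iff.mp fun v _ => ?_
      obtain ⟨g, hg⟩ := hq (Multiplicative.ofAdd v)
      have h2 := h1 (h ▸ mem_top g)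
      have h3 : v = (q g).toAdd := by rw [hg]; rfl
      rw [h3]
      exact h2
  have hrank : Module.finrank (ZMod p) V = d := by
    apply le_antisymm
    · obtain ⟨S, hS, hS2⟩ := Group.rank_spec G
      have h1 := (hspan S).mpr hS2
      rw [← Finset.coe_image] at h1
      have h2 := finrank_span_finset_le_card (R := ZMod p) (S.image (fun g => (q g).toAdd))
      rw [Set.finrank, h1, finrank_top] at h2
      rw [← hd, ← hS]
      exact h2.trans Finset.card_image_le
    · let b := Module.finBasis (ZMod p) V
      choose e he using fun i => hq (Multiplicative.ofAdd (b i))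
      have h1 : closure (Set.range e) = ⊤ := by
        rw [← hspan, ← Set.range_comp]
        have : ((fun g => (q g).toAdd) ∘ e) = b := by
          funext i
          simp only [Function.comp, he]
          rfl
        rw [this]
        exact b.span_eq
      rw [← hd]
      have h2 : closure ((Finset.univ.image e : Finset G) : Set G) = ⊤ := by
        rw [Finset.coe_image, Finset.coe_univ, Set.image_univ, h1]
      refine (Group.rank_le h2).trans (Finset.card_image_le.trans ?_)
      simp
  let b := Module.finBasisOfFinrankEq (ZMod p) V hrank
  choose e he using fun i => hq (Multiplicative.ofAdd (b i))
  have heb : ∀ i, (q (e i)).toAdd = b i := by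
    intro i; rw [he]; rfl
  refine ⟨e, fun i g => b.repr (q g).toAdd i, ?_, ?_, ?_⟩
  · rw [← hspan, ← Set.range_comp]
    have : ((fun g => (q g).toAdd) ∘ e) = b := funext heb
    rw [this]
    exact b.span_eq
  · intro i g h
    beta_reduce
    rw [map_mul, toAdd_mul, map_add, Finsupp.add_apply]
  · intro i j
    simp only [heb]
    rw [b.repr_self, Finsupp.single_apply]
    simp [eq_comm]

lemma basis_data {p d : ℕ} (hp : p.Prime) {G : Type} [Group G] [Finite G]
    [Group.IsNilpotent G] (hpG : IsPGroup p G)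
    (hzc : Subgroup.center G = commutator G)
    (hzf : Subgroup.center G = frattini G) (hd : Group.rank G = d) :
    (∀ g : G, g ^ p ∈ center G) ∧ ∃ (e : Fin d → G) (x : Fin d → G → ZMod p),
      closure (Set.range e) = ⊤ ∧ (∀ i g h, x i (g * h) = x i g + x i h) ∧
      (∀ i j, x i (e j) = if i = j then 1 else 0) := by
  have := Fact.mk hp
  have hpow : ∀ g : G, g ^ p ∈ center G := fun g => hzf ▸ pow_p_mem_frattini hp hpG g
  refine ⟨hpow, ?_⟩
  have hof : Function.Surjective (Abelianization.of (G := G)) := QuotientGroup.mk'_surjective _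
  let instMod : Module (ZMod p) (Additive (Abelianization G)) :=
    AddCommGroup.zmodModule (n := p) (by
    intro v
    obtain ⟨g, hg⟩ := hof v.toMul
    have : v.toMul ^ p = 1 := by
      rw [← hg, ← map_pow]
      exact (QuotientGroup.eq_one_iff _).mpr (hzc ▸ hpow g)
    exact this)
  have hfin : Finite (Additive (Abelianization G)) := inferInstanceAs (Finite (G ⧸ commutator G))
  refine basis_data_aux (V := Additive (Abelianization G))
    ((MulEquiv.multiplicativeAdditive (Abelianization G)).symm.toMonoidHom.comp
      Abelianization.of) ?_ ?_ hd
  · exact hof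
  · rw [← hzf, hzc]
    exact QuotientGroup.ker_mk' _
end SchurAux


namespace SchurAux
open Subgroup

/-- Characters extend along injections of commutative groups. -/
lemma extend_char {A B : Type} [CommGroup A] [CommGroup B] (f : A →* B)
    (hf : Function.Injective f) (g : A →* ℂˣ) : ∃ h : B →* ℂˣ, ∀ a, h (f a) = g a := by
  let _ : RootableBy ℂˣ ℕ := rootableByOfPowLeftSurj ℂˣ ℕ (by
    intro n hn u
    obtain ⟨z, hz⟩ := IsAlgClosed.exists_pow_nat_eq (u : ℂ) (Nat.pos_of_ne_zero hn)
    refine ⟨Units.mk0 z ?_, ?_⟩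
    · rintro rfl
      rw [zero_pow hn] at hz
      exact u.ne_zero hz.symm
    · ext; simpa using hz)
  let _ : RootableBy ℂˣ ℤ := Group.rootableByIntOfRootableByNat ℂˣ
  let _ : DivisibleBy (Additive ℂˣ) ℤ :=
    { div := fun a n => Additive.ofMul (RootableBy.root a.toMul n)
      div_zero := fun a => congrArg Additive.ofMul (RootableBy.root_zero a.toMul)
      div_cancel := fun a hn => congrArg Additive.ofMul (RootableBy.root_cancel a.toMul hn) }
  obtain ⟨h, hh⟩ := (Module.Baer.of_divisible (Additive ℂˣ)).extension_property_addMonoidHom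
    (MonoidHom.toAdditive f) hf (MonoidHom.toAdditive g)
  refine ⟨MonoidHom.toAdditive.symm h, fun a => ?_⟩
  have := DFunLike.congr_fun hh (Additive.ofMul a)
  exact congrArg Additive.toMul this

/-- Two-cocycles with trivial action. -/
structure TwoCoc (G M : Type) [Group G] [CommGroup M] where
  κ : G → G → M
  coc : ∀ g h j, κ (g * h) j * κ g h = κ h j * κ g (h * j)

/-- The underlying type of the central extension of a two-cocycle. -/
@[ext] structure CExt {G M : Type} [Group G] [CommGroup M] (c : TwoCoc G M) where
  fst : G
  snd : M

namespace CExt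
variable {G M : Type} [Group G] [CommGroup M] {c : TwoCoc G M}

lemma one_left (c : TwoCoc G M) (j : G) : c.κ 1 j = c.κ 1 1 := by
  have := c.coc 1 1 j
  rw [one_mul, one_mul] at this
  exact (mul_left_cancel this).symm

lemma one_right (c : TwoCoc G M) (j : G) : c.κ j 1 = c.κ 1 1 := by
  have := c.coc j 1 1
  rw [one_mul, mul_one] at this
  exact mul_right_cancel this

instance : Mul (CExt c) := ⟨fun x y => ⟨x.fst * y.fst, x.snd * y.snd * c.κ x.fst y.fst⟩⟩
instance : One (CExt c) := ⟨⟨1, (c.κ 1 1)⁻¹⟩⟩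
instance : Inv (CExt c) := ⟨fun x => ⟨x.fst⁻¹, x.snd⁻¹ * (c.κ x.fst⁻¹ x.fst)⁻¹ * (c.κ 1 1)⁻¹⟩⟩

@[simp] lemma mul_fst (x y : CExt c) : (x * y).fst = x.fst * y.fst := rfl
@[simp] lemma mul_snd (x y : CExt c) : (x * y).snd = x.snd * y.snd * c.κ x.fst y.fst := rfl
@[simp] lemma one_fst : (1 : CExt c).fst = 1 := rfl
@[simp] lemma one_snd : (1 : CExt c).snd = (c.κ 1 1)⁻¹ := rfl
@[simp] lemma inv_fst (x : CExt c) : (x⁻¹).fst = x.fst⁻¹ := rfl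
@[simp] lemma inv_snd (x : CExt c) :
    (x⁻¹).snd = x.snd⁻¹ * (c.κ x.fst⁻¹ x.fst)⁻¹ * (c.κ 1 1)⁻¹ := rfl

instance : Group (CExt c) := Group.ofLeftAxioms
  (by
    intro x y z
    ext
    · simp [mul_assoc]
    · have := c.coc x.fst y.fst z.fst
      simp only [mul_snd, mul_fst]
      calc _ = x.snd * y.snd * z.snd * (c.κ (x.fst * y.fst) z.fst * c.κ x.fst y.fst) := by
            simp only [mul_assoc, mul_left_comm, mul_comm]
        _ = _ := by
            rw [this]; simp only [mul_assoc, mul_left_comm, mul_comm])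
  (by
    intro x
    ext
    · simp
    · simp [one_left])
  (by
    intro x
    ext
    · simp
    · simp only [mul_snd, inv_snd, inv_fst, one_snd]
      rw [mul_assoc, mul_assoc, mul_assoc, mul_comm, ]
      simp [mul_assoc, mul_left_comm, mul_comm])

/-- The projection of the central extension. -/
def proj (c : TwoCoc G M) : CExt c →* G where
  toFun := CExt.fst
  map_one' := rfl
  map_mul' _ _ := rfl

/-- The inclusion of the central kernel. -/
def incl (c : TwoCoc G M) : M →* CExt c where
  toFun m := ⟨1, m * (c.κ 1 1)⁻¹⟩
  map_one' := by ext <;> simp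
  map_mul' a b := by
    ext
    · simp
    · simp [mul_assoc, mul_left_comm, mul_comm]

lemma proj_surj (c : TwoCoc G M) : Function.Surjective (proj c) := fun g => ⟨⟨g, 1⟩, rfl⟩

lemma incl_inj (c : TwoCoc G M) : Function.Injective (incl c) := fun a b h =>
  mul_right_cancel (congrArg CExt.snd h)

lemma ker_proj (c : TwoCoc G M) : (proj c).ker = (incl c).range := by
  ext x
  rw [MonoidHom.mem_ker]
  constructor
  · intro h
    refine ⟨x.snd * c.κ 1 1, ?_⟩
    ext
    · exact h.symm
    · simp [incl]
  · rintro ⟨m, rfl⟩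
    rfl

lemma ker_central (c : TwoCoc G M) : (proj c).ker ≤ center (CExt c) := by
  rw [ker_proj]
  rintro _ ⟨m, rfl⟩
  rw [mem_center_iff]
  intro x
  ext
  · simp [incl]
  · simp [incl, one_left, one_right, mul_comm]

/-- The part of the kernel inside the commutator subgroup. -/
def tors (c : TwoCoc G M) : Subgroup M := (commutator (CExt c)).comap (incl c)

lemma card_tors (c : TwoCoc G M) :
    Nat.card (commutator (CExt c)) = Nat.card (tors c) * Nat.card (commutator G) := by
  have hmap : (commutator (CExt c)).map (proj c) = commutator G := by
    rw [_root_.commutator_def, map_commutator,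
      map_top_of_surjective _ (proj_surj c), _root_.commutator_def]
  have hrel : (proj c).ker.relIndex (commutator (CExt c)) = Nat.card (commutator G) := by
    rw [relIndex_ker, hmap]
  rw [← hrel, ← ((proj c).ker.subgroupOf (commutator (CExt c))).card_mul_index]
  congr 1
  rw [Nat.card_congr ((tors c).equivMapOfInjective (incl c) (incl_inj c)).toEquiv,
    tors, map_comap_eq, ← ker_proj]
  have h2 : (proj c).ker.subgroupOf (commutator (CExt c)) =
    ((proj c).ker ⊓ commutator (CExt c)).subgroupOf (commutator (CExt c)) := by
    rw [inf_subgroupOf_right]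
  rw [h2]
  exact Nat.card_congr (subgroupOfEquivOfLe inf_le_right).toEquiv

lemma char_trivial (c : TwoCoc G M) (ρ : M →* ℂˣ) (h : ∀ m ∈ tors c, ρ m = 1) :
    ∃ b : G → ℂˣ, ∀ g j, ρ (c.κ g j) * b (g * j) = b g * b j := by
  set φ : M →* Abelianization (CExt c) := Abelianization.of.comp (incl c) with hφ
  have hker : φ.ker = tors c := by
    rw [hφ, ← MonoidHom.comap_ker, Abelianization.ker_of]; rfl
  obtain ⟨χ, hχ⟩ := extend_char (QuotientGroup.kerLift φ) (QuotientGroup.kerLift_injective φ)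
    (QuotientGroup.lift φ.ker ρ (by intro m hm; exact h m (hker ▸ hm)))
  have hχ' : ∀ m, χ (Abelianization.of (incl c m)) = ρ m := fun m => hχ (QuotientGroup.mk m)
  refine ⟨fun g => χ (Abelianization.of (⟨g, 1⟩ : CExt c)), fun g j => ?_⟩
  rw [← map_mul χ, ← map_mul Abelianization.of, ← hχ', ← map_mul χ, ← map_mul Abelianization.of]
  congr 2
  ext
  · simp [incl]
  · simp [incl, one_left]
end CExt

end SchurAux


namespace SchurAux
open Subgroup groupCohomology

/-- The trivial coefficient module. -/
noncomputable abbrev coeff (G : Type) [Group G] := Rep.trivial ℤ G (Additive ℂˣ)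

lemma coc_iff {G : Type} [Group G] (f : G × G → Additive ℂˣ) :
    f ∈ cocycles₂ (coeff G) ↔ ∀ g h j : G,
      f (g * h, j) + f (g, h) = f (h, j) + f (g, h * j) :=
  mem_cocycles₂_iff (A := coeff G) f

lemma cob_iff {G : Type} [Group G] (f : G × G → Additive ℂˣ) :
    f ∈ coboundaries₂ (coeff G) ↔ ∃ b : G → Additive ℂˣ, ∀ g h : G,
      f (g, h) + b (g * h) = b g + b h := by
  constructor
  · rintro ⟨b, rfl⟩
    refine ⟨b, fun g h => ?_⟩
    have : (d₁₂ (coeff G)).hom b (g, h) = b h - b (g * h) + b g := rfl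
    erw [this]
    abel
  · rintro ⟨b, hb⟩
    refine ⟨b, funext fun ⟨g, h⟩ => ?_⟩
    have : (d₁₂ (coeff G)).hom b (g, h) = b h - b (g * h) + b g := rfl
    refine this.trans ?_
    rw [eq_sub_of_add_eq (hb g h)]
    abel

lemma H2π_surj (G : Type) [Group G] : Function.Surjective (H2π (coeff G)) := fun x =>
  H2_induction_on x fun y => ⟨y, rfl⟩

/-- The universal cocycle. -/
noncomputable def univCoc (G : Type) [Group G] : TwoCoc G (cocycles₂ (coeff G) → ℂˣ) where
  κ g h := fun f => Additive.toMul (f.1 (g, h) : Additive ℂˣ)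
  coc g h j := by
    funext f
    exact congrArg Additive.toMul ((coc_iff (G := G) f.1).mp f.2 g h j)

lemma char_card (T : Type) [CommGroup T] [Finite T] :
    Finite (T →* ℂˣ) ∧ Nat.card (T →* ℂˣ) = Nat.card T := by
  have : NeZero (Monoid.exponent T) := ⟨Monoid.exponent_ne_zero_of_finite⟩
  have h := CommGroup.card_monoidHom_of_hasEnoughRootsOfUnity T ℂ
  exact ⟨Nat.finite_of_card_ne_zero (h ▸ Nat.card_pos.ne'), h⟩

lemma upper_s13 (G : Type) [Group G] [Finite (CExt.tors (univCoc G))] :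
    Finite (schurMultiplier G) ∧ 
      Nat.card (schurMultiplier G) ≤ Nat.card (CExt.tors (univCoc G)) := by
  obtain ⟨hf, hc⟩ := char_card (CExt.tors (univCoc G))
  choose s hs using H2π_surj G
  let F : schurMultiplier G → (CExt.tors (univCoc G) →* ℂˣ) := fun x =>
    (Pi.evalMonoidHom (fun _ => ℂˣ) (s x)).comp (CExt.tors (univCoc G)).subtype
  have hF : Function.Injective F := by
    intro x y hxy
    obtain ⟨b, hb⟩ := CExt.char_trivial (univCoc G)
      (Pi.evalMonoidHom (fun _ => ℂˣ) (s x) / Pi.evalMonoidHom (fun _ => ℂˣ) (s y)) (by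
        intro m hm
        have h1 := DFunLike.congr_fun hxy ⟨m, hm⟩
        change m (s x) / m (s y) = 1
        exact div_eq_one.mpr h1)
    rw [← hs x, ← hs y]
    refine (H2π_eq_iff _ _).mpr ((cob_iff _).mpr ⟨fun g => Additive.ofMul (b g), fun g h => ?_⟩)
    exact congrArg Additive.ofMul (hb g h)
  have := Finite.of_injective F hF
  exact ⟨this, hc ▸ Nat.card_le_card_of_injective F hF⟩

lemma lower_s13 {p d : ℕ} (hp : p.Prime) {G : Type} [Group G] [Finite (schurMultiplier G)]
    (hzc : center G = commutator G) (hz : Nat.card (center G) = p ^ 3)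
    (e : Fin d → G) (x : Fin d → G → ZMod p)
    (hx : ∀ i g h, x i (g * h) = x i g + x i h)
    (hxe : ∀ i j, x i (e j) = if i = j then 1 else 0) :
    p ^ d.choose 2 ≤ Nat.card (schurMultiplier G) * p ^ 3 := by
  have : NeZero p := ⟨hp.ne_zero⟩
  have hzf : Finite (center G) := Nat.finite_of_card_ne_zero (hz ▸ pow_ne_zero _ hp.ne_zero)
  obtain ⟨hfin, hcard⟩ := char_card (center G)
  let I := {q : Fin d × Fin d // q.1 < q.2}
  have hI : Nat.card (I → ZMod p) = p ^ d.choose 2 := by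
    rw [Nat.card_fun, Nat.card_zmod, ← card_pairs_s13 d, Nat.card_eq_fintype_card, Fintype.card_subtype]
  -- the character of the prime field
  obtain ⟨ψ, hψ⟩ : ∃ ψ : ZMod p →+ Additive ℂˣ, Function.Injective ψ := by
    refine ⟨(MonoidHom.toAdditive Circle.toUnits).comp (ZMod.toCircle (N := p)).toAddMonoidHom, ?_⟩
    intro a b hab
    apply ZMod.injective_toCircle (N := p)
    have h1 : Circle.toUnits (ZMod.toCircle a) = Circle.toUnits (ZMod.toCircle b) := hab
    exact Circle.ext (congrArg Units.val h1)
  have hxz : ∀ i, ∀ z ∈ center G, x i z = 0 := by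
    intro i z hz
    rw [hzc] at hz
    let X : G →* Multiplicative (ZMod p) :=
      MonoidHom.mk' (fun g => Multiplicative.ofAdd (x i g)) (fun g h => by rw [hx]; rfl)
    exact (Abelianization.commutator_subset_ker X hz : X z = 1)
  let B : (I → ZMod p) → G → G → ZMod p := fun t g h => ∑ q : I, t q * (x q.1.1 g * x q.1.2 h)
  have hBt : ∀ s t g h, B (s + t) g h = B s g h + B t g h := by
    intro s t g h
    simp only [B, Pi.add_apply, add_mul, Finset.sum_add_distrib]
  have hBl : ∀ t g g' h, B t (g * g') h = B t g h + B t g' h := by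
    intro t g g' h
    simp only [B, hx, add_mul, mul_add, Finset.sum_add_distrib]
  have hBr : ∀ t g h h', B t g (h * h') = B t g h + B t g h' := by
    intro t g h h'
    simp only [B, hx, mul_add, Finset.sum_add_distrib]
  have hBzl : ∀ t, ∀ z ∈ center G, ∀ g, B t z g = 0 := by
    intro t z hz g
    simp only [B, hxz _ z hz, zero_mul, mul_zero, Finset.sum_const_zero]
  have hBzr : ∀ t, ∀ z ∈ center G, ∀ g, B t g z = 0 := by
    intro t z hz g
    simp only [B, hxz _ z hz, mul_zero, Finset.sum_const_zero]
  have hBe : ∀ t (q : I), B t (e q.1.1) (e q.1.2) - B t (e q.1.2) (e q.1.1) = t q := by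
    intro t q
    have h1 : B t (e q.1.1) (e q.1.2) = t q := by
      simp only [B, hxe]
      rw [Finset.sum_eq_single q]
      · simp
      · intro r _ hr
        by_cases h1 : r.1.1 = q.1.1
        · have h2 : r.1.2 ≠ q.1.2 := fun h2 => hr (Subtype.ext (Prod.ext h1 h2))
          simp [h2]
        · simp [h1]
      · simp
    have h2 : B t (e q.1.2) (e q.1.1) = 0 := by
      simp only [B, hxe]
      refine Finset.sum_eq_zero fun r _ => ?_
      by_cases h1 : r.1.1 = q.1.2
      · have h2 : r.1.2 ≠ q.1.1 := by
          intro h2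
          have h3 := r.2
          rw [h1, h2] at h3
          exact absurd h3 (not_lt.mpr q.2.le)
        simp [h2]
      · simp [h1]
    rw [h1, h2, sub_zero]
  let C : (I → ZMod p) →+ cocycles₂ (coeff G) := AddMonoidHom.mk'
    (fun t => ⟨fun q => ψ (B t q.1 q.2), (coc_iff _).mpr (by
      intro g h j
      simp only [hBl, hBr, map_add]
      abel)⟩) (by
      intro s t
      apply Subtype.ext
      funext q
      change ψ (B (s + t) q.1 q.2) = ψ (B s q.1 q.2) + ψ (B t q.1 q.2)
      rw [hBt, map_add])
  let Θ : (I → ZMod p) →+ H2 (coeff G) := (H2π (coeff G)).hom.toAddMonoidHom.comp C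
  have hker : ∀ t : Θ.ker, ∃ b : G → Additive ℂˣ, ∀ g h : G,
      ψ (B t g h) + b (g * h) = b g + b h := fun t =>
    (cob_iff _).mp ((H2π_eq_zero_iff _).mp t.2)
  choose b hb using hker
  let R : Θ.ker → (center G →* ℂˣ) := fun t => MonoidHom.mk' (fun z => Additive.toMul (b t z.1)) (by
    intro z w
    have := hb t z w
    rw [hBzl _ _ z.2, map_zero, zero_add] at this
    exact congrArg Additive.toMul this)
  have hR : Function.Injective R := by
    intro s t hst
    have hst' : ∀ z ∈ center G, b s z = b t z := fun z hz =>
      congrArg Additive.ofMul (DFunLike.congr_fun hst ⟨z, hz⟩)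
    -- the alternating part is read off from commutators
    have key : ∀ (t : Θ.ker) (g h : G), ψ (B t g h - B t h g) + b t (g * h * (h * g)⁻¹) = 0 := by
      intro t g h
      have hzm : g * h * (h * g)⁻¹ ∈ center G := by
        rw [hzc]
        have : g * h * (h * g)⁻¹ = g * h * g⁻¹ * h⁻¹ := by group
        rw [this]
        exact commutator_mem_commutator (mem_top g) (mem_top h)
      have h1 := hb t (g * h * (h * g)⁻¹) (h * g)
      rw [hBzl _ _ hzm, map_zero, zero_add, inv_mul_cancel_right] at h1
      have h2 := hb t g h
      have h3 := hb t h g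
      rw [map_sub]
      rw [h1] at h2
      have h4 : b t (h * g) = b t h + b t g - ψ (B t h g) := eq_sub_of_add_eq' h3
      rw [h4] at h2
      have h5 : ψ (B t g h) - ψ (B t h g) + b t (g * h * (h * g)⁻¹) + (b t g + b t h) 
          = 0 + (b t g + b t h) := by
        rw [zero_add]; nth_rewrite 2 [← h2]; abel
      exact add_right_cancel h5
    apply Subtype.ext
    funext q
    rw [← hBe s q, ← hBe t q]
    apply hψ
    have hzm : e q.1.1 * e q.1.2 * (e q.1.2 * e q.1.1)⁻¹ ∈ center G := by
      rw [hzc]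
      have : ∀ g h : G, g * h * (h * g)⁻¹ = g * h * g⁻¹ * h⁻¹ := fun g h => by group
      rw [this]
      exact commutator_mem_commutator (mem_top _) (mem_top _)
    have k1 := key s (e q.1.1) (e q.1.2)
    have k2 := key t (e q.1.1) (e q.1.2)
    rw [hst' _ hzm] at k1
    exact add_right_cancel (k1.trans k2.symm)
  have h1 : Nat.card Θ.ker ≤ p ^ 3 := by
    rw [← hz, ← hcard]
    exact Nat.card_le_card_of_injective R hR
  have hfH : Finite (H2 (coeff G)) := ‹Finite (schurMultiplier G)›
  have h2 : Θ.ker.index ≤ Nat.card (schurMultiplier G) := by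
    rw [AddSubgroup.index_ker]
    exact Nat.card_le_card_of_injective (fun y : Θ.range => (y.1 : H2 (coeff G)))
      Subtype.val_injective
  rw [← hI, ← Θ.ker.card_mul_index, mul_comm]
  exact Nat.mul_le_mul h2 h1
end SchurAux

/-- Corollary 2 for special `p`-groups with center of order `p ^ 3`:
`p ^ (d * (d - 1) / 2 - 3) ≤ |M(G₂)| ≤ p ^ (d * (d - 1) / 2 + 6)`.
A special `p`-group is a finite `p`-group of nilpotency class 2 whose center
coincides with its derived subgroup and with its Frattini subgroup. -/
theorem schur_multiplier_bounds_special_center_p_cube (p d : ℕ) (hp : p.Prime)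
    (G : Type) [Group G] [Finite G] [Group.IsNilpotent G]
    (hpG : IsPGroup p G)
    (hc : Group.nilpotencyClass G = 2)
    (hzc : Subgroup.center G = commutator G)
    (hzf : Subgroup.center G = frattini G)
    (hz : Nat.card (Subgroup.center G) = p ^ 3)
    (hd : Group.rank G = d) :
    (p : ℝ) ^ ((d : ℝ) * ((d : ℝ) - 1) / 2 - 3) ≤ (Nat.card (schurMultiplier G) : ℝ) ∧
    (Nat.card (schurMultiplier G) : ℝ) ≤ (p : ℝ) ^ ((d : ℝ) * ((d : ℝ) - 1) / 2 + 6) := by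
  obtain ⟨hpow, e, x, he, hx, hxe⟩ := SchurAux.basis_data hp hpG hzc hzf hd
  obtain ⟨hfin, hcard⟩ := SchurAux.card_commutator_ext hp (SchurAux.CExt.proj (SchurAux.univCoc G))
    (SchurAux.CExt.proj_surj _) (SchurAux.CExt.ker_central _) hzc hz hpow e he
  have hT := SchurAux.CExt.card_tors (SchurAux.univCoc G)
  rw [← hzc, hz] at hT
  have hpos : 0 < Nat.card (commutator (SchurAux.CExt (SchurAux.univCoc G))) := Nat.card_pos
  have hTf : Finite (SchurAux.CExt.tors (SchurAux.univCoc G)) := by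
    apply Nat.finite_of_card_ne_zero
    intro h0
    rw [hT, h0, zero_mul] at hpos
    exact lt_irrefl _ hpos
  obtain ⟨hS, hSc⟩ := SchurAux.upper_s13 G
  have hlow := SchurAux.lower_s13 hp hzc hz e x hx hxe
  have hp0 : (0 : ℝ) < p := by exact_mod_cast hp.pos
  have hchoose : (d : ℝ) * ((d : ℝ) - 1) / 2 = ((d.choose 2 : ℕ) : ℝ) := (Nat.cast_choose_two ℝ d).symm
  have hup : Nat.card (schurMultiplier G) ≤ p ^ (d.choose 2 + 6) := by
    have h3 : 0 < p ^ 3 := pow_pos hp.pos 3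
    refine hSc.trans (Nat.le_of_mul_le_mul_right ?_ h3)
    rw [← hT, ← pow_add]
    exact hcard
  rw [hchoose]
  constructor
  · rw [Real.rpow_sub hp0, Real.rpow_natCast, div_le_iff₀ (Real.rpow_pos_of_pos hp0 _)]
    have h3 : (p : ℝ) ^ (3 : ℝ) = (p : ℝ) ^ (3 : ℕ) := by
      rw [← Real.rpow_natCast]; norm_num
    rw [h3]
    exact_mod_cast hlow
  · have h6 : ((d.choose 2 : ℕ) : ℝ) + 6 = ((d.choose 2 + 6 : ℕ) : ℝ) := by push_cast; ring
    rw [h6, Real.rpow_natCast]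
    exact_mod_cast hup
end
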